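/- arXiv:1909.01972 — 3 statements merged into one kernel-verified Lean document; each statement's English description precedes it below -/
import Mathlib

section
/- For all n ≥ 1 and all vertices x, y of G_n, the zero-average Green function satisfies G_{G_n}(x,y) ≤ (16/7)·((d−1)/(d−2))·(1/(d−1))^{d_{G_n}(x,y)} + 2·ln(N_n)·N_n^{−c_0/β} + 1/(β·N_n^{c_0}), where d_{G_n} is the graph distance on G_n. -/
open MeasureTheory ProbabilityTheory Filter Set
open scoped ENNReal NNReal ENat Classical

namespace GFF

variable {V : Type*} {T : Type*}

/-- Number of ordered adjacent pairs inside `U` (twice the number of edges of the induced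
subgraph). -/
noncomputable def adjPairs (G : SimpleGraph V) (U : Set V) : ℕ :=
  Set.ncard {p : V × V | p.1 ∈ U ∧ p.2 ∈ U ∧ G.Adj p.1 p.2}

/-- `U` (assumed connected) induces a tree, i.e. has tree excess zero. -/
def TxZero (G : SimpleGraph V) (U : Set V) : Prop :=
  adjPairs G U = 2 * (Set.ncard U - 1)

/-- Closed ball of radius `R` for the graph distance. -/
def gball (G : SimpleGraph V) (x : V) (R : ℕ) : Set V := {y | G.dist x y ≤ R}

/-- Set of vertices within distance `R` of the set `A`. -/
def sball (G : SimpleGraph V) (A : Set V) (R : ℕ) : Set V := {y | ∃ a ∈ A, G.dist a y ≤ R}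

/-- Connected component containing `x` of the level set `{ω ≥ h}`. -/
def levelComp (G : SimpleGraph V) (h : ℝ) (ω : V → ℝ) (x : V) : Set V :=
  {y | ∃ p : G.Walk x y, ∀ v ∈ p.support, h ≤ ω v}

/-- `G` is `d`-regular. -/
def IsReg (G : SimpleGraph V) (d : ℕ) : Prop := ∀ v, Nat.card (G.neighborSet v) = d

/-- `G` is an infinite `d`-regular tree. -/
def IsRegTree (G : SimpleGraph V) (d : ℕ) : Prop :=
  G.Connected ∧ G.IsAcyclic ∧ IsReg G d

/-- Transition matrix of SRW on a `d`-regular graph. -/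
noncomputable def transP [Fintype V] (G : SimpleGraph V) (d : ℕ) : Matrix V V ℝ :=
  Matrix.of fun u v => if G.Adj u v then ((d : ℝ))⁻¹ else 0

/-- All non-zero eigenvalues of `I - P` are at least `β`. -/
def SpectralGapLB [Fintype V] (G : SimpleGraph V) (d : ℕ) (β : ℝ) : Prop :=
  ∀ (f : V → ℝ) (lam : ℝ),
    Matrix.mulVec ((1 : Matrix V V ℝ) - transP G d) f = lam • f → f ≠ 0 → lam = 0 ∨ β ≤ lam

/-- `P_x[X̄_t = y]` for the continuous-time SRW with i.i.d. mean-one exponential holding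
times (Poissonized jump chain). -/
noncomputable def heatK [Fintype V] (G : SimpleGraph V) (d : ℕ) (t : ℝ) (x y : V) : ℝ :=
  ∑' k : ℕ, Real.exp (-t) * t ^ k / (Nat.factorial k) * ((transP G d) ^ k) x y

/-- The zero-average Green function. -/
noncomputable def zGreen [Fintype V] (G : SimpleGraph V) (d Nn : ℕ) (x y : V) : ℝ :=
  ∫ t in Set.Ioi (0 : ℝ), (heatK G d t x y - 1 / (Nn : ℝ))

/-- Green function of SRW on the `d`-regular tree. -/
noncomputable def treeGreen (G : SimpleGraph V) (d : ℕ) (x y : V) : ℝ :=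
  (((d : ℝ) - 1) / ((d : ℝ) - 2)) * (((d : ℝ) - 1)⁻¹) ^ (G.dist x y)

/-- `μ` is the law of the centred Gaussian field with covariance `K`. -/
def IsGaussianField {I : Type*} (μ : Measure (I → ℝ)) (K : I → I → ℝ) : Prop :=
  IsProbabilityMeasure μ ∧
    ∀ c : I →₀ ℝ,
      μ.map (fun ω => ∑ i ∈ c.support, c i * ω i) =
        gaussianReal 0 (Real.toNNReal (∑ i ∈ c.support, ∑ j ∈ c.support, c i * c j * K i j))

/-- One-step transition probability of SRW. -/
noncomputable def srwStep (G : SimpleGraph V) (d : ℕ) (u v : V) : ℝ≥0∞ :=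
  if G.Adj u v then (d : ℝ≥0∞)⁻¹ else 0

/-- `W x` is the law of discrete-time SRW on `G` started at `x`. -/
def IsSRW [MeasurableSpace V] (G : SimpleGraph V) (d : ℕ) (W : V → Measure (ℕ → V)) : Prop :=
  (∀ x, IsProbabilityMeasure (W x)) ∧
    ∀ (x : V) (k : ℕ) (p : ℕ → V),
      W x {ω | ∀ i ≤ k, ω i = p i} =
        (if p 0 = x then 1 else 0) * ∏ i ∈ Finset.range k, srwStep G d (p i) (p (i + 1))

/-- Entrance time of the set `A` (`⊤` if never entered). -/
noncomputable def hitTime (A : Set V) (ω : ℕ → V) : ℕ∞ :=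
  sInf ((Nat.cast : ℕ → ℕ∞) '' {k | ω k ∈ A})

/-- Exit time of the set `U`. -/
noncomputable def exitTime (U : Set V) (ω : ℕ → V) : ℕ∞ := hitTime Uᶜ ω

/-- Position of the walk at the entrance time of `A`. -/
noncomputable def stopAt (A : Set V) (ω : ℕ → V) : V := ω (hitTime A ω).toNat

/-- `π` is a cover tree of `G` at `x`. -/
def IsCoverMap (Gt : SimpleGraph T) (G : SimpleGraph V) (o : T) (x : V) (π : T → V) : Prop :=
  π o = x ∧ Function.Surjective π ∧ ∀ y : T, π '' (Gt.neighborSet y) = G.neighborSet (π y)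

/-- `T_d^+`: the vertices of the tree whose geodesic to `o` avoids the fixed neighbour
`obar` of `o`. -/
def treePlus (Gt : SimpleGraph T) (o obar : T) : Set T :=
  {z | Gt.dist z obar = Gt.dist z o + 1}

/-- `S^+_{T_d}(o,R)`. -/
def spherePlus (Gt : SimpleGraph T) (o obar : T) (R : ℕ) : Set T :=
  {z | z ∈ treePlus Gt o obar ∧ Gt.dist o z = R}

/-- The critical value for level-set percolation on the tree (w.r.t. the law `μT`). -/
noncomputable def hstar (Gt : SimpleGraph T) (o : T) (μT : Measure (T → ℝ)) : ℝ :=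
  sInf {h : ℝ | μT {ω | (levelComp Gt h ω o).Infinite} = 0}

/-- The forward percolation probability `η⁺(h)`. -/
noncomputable def etaPlus (Gt : SimpleGraph T) (o obar : T) (μT : Measure (T → ℝ)) (h : ℝ) :
    ℝ :=
  (μT {ω | (levelComp Gt h ω o ∩ treePlus Gt o obar).Infinite}).toReal

/-- `s_n`. -/
noncomputable def sn (d Nn : ℕ) : ℕ :=
  max 1 ⌊(8 : ℝ) * Real.logb ((d : ℝ) - 1) (Real.logb ((d : ℝ) - 1) (Nn : ℝ))⌋₊

/-- `c₀ = αβ/(d-1)`. -/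
noncomputable def c0 (d : ℕ) (α β : ℝ) : ℝ := α * β / ((d : ℝ) - 1)

/-- `r_n`. -/
noncomputable def rn (d : ℕ) (α β : ℝ) (Nn : ℕ) : ℕ :=
  max 1 ⌊(c0 d α β / 18) * Real.logb ((d : ℝ) - 1) (Nn : ℝ)⌋₊

/-- `R_n`. -/
noncomputable def Rn (d : ℕ) (α β : ℝ) (Nn : ℕ) : ℕ :=
  max 1 ⌊(c0 d α β / 6) * Real.logb ((d : ℝ) - 1) (Nn : ℝ)⌋₊

/-- `F_A(x,s)`: the vertices of `B(A,s) ∖ A` connected to `x` within `B(A,s) ∖ A`. -/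
def Fset (G : SimpleGraph V) (A : Set V) (s : ℕ) (x : V) : Set V :=
  {z | ∃ p : G.Walk x z, ∀ v ∈ p.support, v ∈ sball G A s ∧ v ∉ A}

/-- Good vertex at the boundary of `A`. -/
def GoodVertex (G : SimpleGraph V) (A : Set V) (s : ℕ) (x : V) : Prop :=
  x ∉ A ∧ (∃! y, y ∈ A ∧ G.Adj x y) ∧
    TxZero G (Fset G A s x) ∧
    ∀ y : V, y ∉ A → (∃ a ∈ A, G.Adj y a) → y ≠ x →
      ∀ p : G.Walk y x, (∀ v ∈ p.support, v ∉ A) → ∃ v ∈ p.support, v ∉ sball G A s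

end GFF

/-!
Split the integral defining the zero-average Green function at time `T = α log N / (d - 1)`.

After time `T` the spectral gap gives `|P_x[X̄_t = y] - 1 / N| ≤ exp (-β t)`. Before time `T`, a
Chernoff bound for the Poisson number of jumps shows that walks with more than
`R = ⌊α log_{d-1} N⌋` jumps contribute at most `T exp (-T)`. Walks with at most `R` jumps stay in
the ball `B` of radius `R` around `x`, where their expected number of visits is dominated by any
nonnegative `f ≥ δ_x + P f`, with `P` killed outside `B`.

The ball is a tree or a tree plus one edge `uv`. For a tree, `f` is the Green function of the
infinite `d`-regular tree. With an additional edge, `f` sums that Green function over the lifts of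
a vertex to the universal cover. Each turn around the cycle costs a factor `Q = q ^ (dist u v + 1)`
with `q = 1 / (d - 1)`; by a four-point inequality in the tree, the shortest lift and the two
geometric series total at most `2 / (1 - Q)` tree Green functions. The cycle has length at least
`3`, so `Q ≤ 1 / 8` and `2 / (1 - Q) ≤ 16 / 7`.
-/

namespace GFF

open SimpleGraph

section Distance

variable {W : Type*} {H T : SimpleGraph W}

theorem exists_adj_dist_add_one_eq (hH : H.Connected) {a z : W} (hz : z ≠ a) :
    ∃ w, H.Adj z w ∧ H.dist a w + 1 = H.dist a z := by
  obtain ⟨p, hp⟩ := hH.exists_walk_length_eq_dist z a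
  cases p with
  | nil => exact absurd rfl hz
  | @cons _ w _ hzw q =>
    refine ⟨w, hzw, ?_⟩
    have hwa : H.dist a w ≤ q.length := dist_comm (G := H) ▸ dist_le q
    have htri : H.dist a z ≤ H.dist a w + H.dist w z := hH.dist_triangle
    rw [dist_eq_one_iff_adj.2 hzw.symm] at htri
    rw [Walk.length_cons, dist_comm] at hp
    lia

theorem eq_of_adj_of_dist_add_one_eq (hT : T.IsTree) {a z w w' : W} (hw : T.Adj z w)
    (hw' : T.Adj z w') (haw : T.dist a w + 1 = T.dist a z) (haw' : T.dist a w' + 1 = T.dist a z) :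
    w = w' := by
  obtain ⟨p, hp, -⟩ := hT.connected.exists_path_of_dist a z
  have eq_penultimate {v : W} (hv : T.Adj z v) (hav : T.dist a v + 1 = T.dist a z) :
      v = p.penultimate := by
    obtain ⟨q, hq, hql⟩ := hT.connected.exists_path_of_dist a v
    have hz : z ∉ q.support := fun hz => by
      have hlen := (dist_le (q.takeUntil z hz)).trans (q.length_takeUntil_le_length hz)
      lia
    exact hT.isAcyclic.eq_penultimate_of_adj_end hp hv
      (hT.isAcyclic.mem_support_of_ne_mem_support_of_adj_of_isPath hp hq hv hz)
  rw [eq_penultimate hw haw, eq_penultimate hw' haw']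

theorem dist_eq_add_of_adj (hT : T.IsTree) {u v x x' : W} (hx : T.Adj x x')
    (hu : T.dist u x' + 1 = T.dist u x) (hv : T.dist v x' = T.dist v x + 1) :
    T.dist u v = T.dist u x + T.dist v x := by
  induction hk : T.dist v x generalizing x x' with
  | zero =>
    obtain rfl := hT.connected.dist_eq_zero_iff.1 hk
    rfl
  | succ k ih =>
    have hxv : x ≠ v := by rintro rfl; simp at hk
    obtain ⟨w, hxw, hvw⟩ := exists_adj_dist_add_one_eq hT.connected hxv
    have huw : T.dist u w = T.dist u x + 1 := by
      refine (hT.dist_eq_dist_add_one_of_adj u hxw).resolve_left fun h => ?_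
      obtain rfl := eq_of_adj_of_dist_add_one_eq hT hx hxw hu h.symm
      lia
    have := ih hxw.symm huw.symm hvw.symm (by lia)
    lia

theorem dist_add_dist_le_or_le (hT : T.IsTree) (u v x y : W) :
    T.dist y x + T.dist u v ≤ T.dist u x + T.dist v y ∨
      T.dist y x + T.dist u v ≤ T.dist v x + T.dist u y := by
  induction hk : T.dist u x generalizing x with
  | zero =>
    obtain rfl := hT.connected.dist_eq_zero_iff.1 hk
    right
    rw [dist_comm (u := y), dist_comm (u := u) (v := v), add_comm]
  | succ k ih =>
    have hxu : x ≠ u := by rintro rfl; simp at hk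
    obtain ⟨w, hxw, huw⟩ := exists_adj_dist_add_one_eq hT.connected hxu
    have htri : T.dist u v ≤ T.dist u x + T.dist v x :=
      hT.connected.dist_triangle.trans_eq (by rw [dist_comm (u := x)])
    rcases hT.dist_eq_dist_add_one_of_adj y hxw with hyw | hyw
    · rcases hT.dist_eq_dist_add_one_of_adj v hxw with hvw | hvw
      · have := ih w (by lia)
        lia
      · have hyv := dist_eq_add_of_adj hT hxw hyw.symm hvw
        rw [dist_comm] at hyv
        lia
    · have huy := dist_eq_add_of_adj hT hxw huw hyw
      lia

theorem isTree_or_exists_eq_sup_edge [Finite W] (hH : H.Connected)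
    (hcard : Nat.card H.edgeSet ≤ Nat.card W) :
    H.IsTree ∨ ∃ T u v, T.IsTree ∧ u ≠ v ∧ ¬T.Adj u v ∧ H = T ⊔ edge u v := by
  refine or_iff_not_imp_left.2 fun hHtree => ?_
  have hacyclic : ¬H.IsAcyclic := fun h => hHtree ⟨hH, h⟩
  rw [isAcyclic_iff_forall_adj_isBridge] at hacyclic
  push Not at hacyclic
  obtain ⟨u, v, huv, hbridge⟩ := hacyclic
  have hconn := hH.connected_delete_edge_of_not_isBridge hbridge
  refine ⟨H.deleteEdges {s(u, v)}, u, v, isTree_iff_connected_and_card.2 ⟨hconn, ?_⟩, huv.ne,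
    by simp, ?_⟩
  · refine le_antisymm ?_ hconn.card_vert_le_card_edgeSet_add_one
    rw [edgeSet_deleteEdges, Nat.card_coe_set_eq,
      Set.ncard_sdiff_singleton_add_one (a := s(u, v)) huv]
    rwa [← Nat.card_coe_set_eq]
  · ext a b
    simp only [sup_adj, deleteEdges_adj, edge_adj, Set.mem_singleton_iff, Sym2.eq_iff]
    have := huv.symm
    grind [Adj.ne]

end Distance

section TreeGreen

variable {W : Type*} {H T : SimpleGraph W} {d : ℕ}

theorem sum_neighborFinset_pow_dist [T.LocallyFinite] (hT : T.IsTree) {K : Type*} [Field K] {q : K}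
    (hq : q ≠ 0) (a z : W) :
    ∑ w ∈ T.neighborFinset z, q ^ T.dist a w =
      (q⁻¹ + (T.degree z - 1) * q) * q ^ T.dist a z - if z = a then q⁻¹ - q else 0 := by
  by_cases hza : z = a
  · subst hza
    have hpow : ∀ w ∈ T.neighborFinset z, q ^ T.dist z w = q := fun w hw => by
      rw [dist_eq_one_iff_adj.2 ((T.mem_neighborFinset z w).1 hw), pow_one]
    rw [Finset.sum_congr rfl hpow, Finset.sum_const, card_neighborFinset_eq_degree, nsmul_eq_mul,
      dist_self, if_pos rfl]
    ring
  · obtain ⟨p, hzp, hap⟩ := exists_adj_dist_add_one_eq hT.connected hza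
    have hp : p ∈ T.neighborFinset z := (T.mem_neighborFinset z p).2 hzp
    have hpow : ∀ w ∈ (T.neighborFinset z).erase p, q ^ T.dist a w = q * q ^ T.dist a z := by
      intro w hw
      obtain ⟨hwp, hzw⟩ := Finset.mem_erase.1 hw
      rw [mem_neighborFinset] at hzw
      have haw := (hT.dist_eq_dist_add_one_of_adj a hzw).resolve_left fun h =>
        hwp (eq_of_adj_of_dist_add_one_eq hT hzw hzp h.symm hap)
      rw [haw, pow_succ']
    have hcard : (((T.neighborFinset z).erase p).card : K) = T.degree z - 1 := by
      rw [← card_neighborFinset_eq_degree, ← Finset.card_erase_add_one hp]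
      push_cast
      ring
    rw [← Finset.add_sum_erase _ _ hp, Finset.sum_congr rfl hpow, Finset.sum_const, nsmul_eq_mul,
      hcard, ← hap, if_neg hza]
    field_simp
    ring

theorem treeGreen_nonneg (hd : 2 ≤ d) (a z : W) : 0 ≤ treeGreen H d a z := by
  have hd' : (2 : ℝ) ≤ d := by exact_mod_cast hd
  exact mul_nonneg (div_nonneg (by linarith) (by linarith))
    (pow_nonneg (inv_nonneg.2 (by linarith)) _)

theorem inv_sub_one_mem_Ioc (hd : 3 ≤ d) : (d - 1 : ℝ)⁻¹ ∈ Set.Ioc 0 (1 / 2) := by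
  have hd' : (3 : ℝ) ≤ d := by exact_mod_cast hd
  rw [one_div]
  exact ⟨inv_pos.2 (by linarith), inv_anti₀ two_pos (by linarith)⟩

theorem treeGreen_le_treeGreen_of_dist_le {V : Type*} {G : SimpleGraph V} (hd : 3 ≤ d)
    {x y : V} {a b : W} (h : G.dist x y ≤ H.dist a b) : treeGreen H d a b ≤ treeGreen G d x y := by
  obtain ⟨hq₀, hq₁⟩ := inv_sub_one_mem_Ioc hd
  have hd' : (3 : ℝ) ≤ d := by exact_mod_cast hd
  exact mul_le_mul_of_nonneg_left (pow_le_pow_of_le_one hq₀.le (by linarith) h)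
    (div_nonneg (by linarith) (by linarith))

theorem sum_neighborFinset_treeGreen [T.LocallyFinite] (hT : T.IsTree) (hd : 3 ≤ d) (a z : W) :
    ∑ w ∈ T.neighborFinset z, treeGreen T d a w =
      (d - (d - T.degree z) / (d - 1)) * treeGreen T d a z - if z = a then (d : ℝ) else 0 := by
  have hd' : (3 : ℝ) ≤ d := by exact_mod_cast hd
  have h₁ : (d : ℝ) - 1 ≠ 0 := by linarith
  have h₂ : (d : ℝ) - 2 ≠ 0 := by linarith
  simp only [treeGreen, ← Finset.mul_sum, sum_neighborFinset_pow_dist hT (inv_ne_zero h₁)]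
  split_ifs <;> field_simp <;> ring

/-- A nonnegative supersolution of the equation `f = δ_x + P f` for the operator
`P f z = d⁻¹ ∑ w ∼ z, f w` on `H`; where `H` has degree less than `d`, this is the walk killed
with the remaining probability. Such an `f` dominates the Green function of `P`. -/
structure IsGreenSupersolution (H : SimpleGraph W) [H.LocallyFinite] (d : ℕ) (x : W)
    (f : W → ℝ) : Prop where
  nonneg (z : W) : 0 ≤ f z
  le (z : W) : (if z = x then 1 else 0) + (d : ℝ)⁻¹ * ∑ w ∈ H.neighborFinset z, f w ≤ f z

theorem isGreenSupersolution_treeGreen [T.LocallyFinite] (hT : T.IsTree) (hd : 3 ≤ d)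
    (hdeg : ∀ z, T.degree z ≤ d) (x : W) :
    IsGreenSupersolution T d x (treeGreen T d x) where
  nonneg := treeGreen_nonneg (by lia) x
  le z := by
    have hd' : (3 : ℝ) ≤ d := by exact_mod_cast hd
    have hdz : (T.degree z : ℝ) ≤ d := by exact_mod_cast hdeg z
    have hloss : 0 ≤ (d - T.degree z) / ((d : ℝ) - 1) * treeGreen T d x z :=
      mul_nonneg (div_nonneg (by linarith) (by linarith)) (treeGreen_nonneg (by lia) x z)
    rw [sum_neighborFinset_treeGreen hT hd]
    field_simp
    split_ifs <;> linarith

end TreeGreen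

section CycleGreen

variable {W : Type*} {H T : SimpleGraph W} {d : ℕ} {u v : W}

/-- The Green function on the graph obtained by adding the edge `uv` to a tree `T`: the sum of
the tree Green function over all lifts of `z` to the universal cover, a chain of copies of `T` in
which `u` in one copy is joined to `v` in the next. The copy of `z` lying `n + 1` copies after that
of `x` contributes `q ^ (dist x u + n * (dist u v + 1) + 1 + dist v z)` with `q = (d - 1)⁻¹`, and
similarly on the other side with `u` and `v` exchanged; the geometric series in `n` is summed. -/
noncomputable def cycleGreen (T : SimpleGraph W) (d : ℕ) (u v x z : W) : ℝ :=
  treeGreen T d x z + (d - 1 : ℝ)⁻¹ / (1 - (d - 1 : ℝ)⁻¹ ^ (T.dist u v + 1)) *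
    ((d - 1 : ℝ)⁻¹ ^ T.dist x u * treeGreen T d v z +
      (d - 1 : ℝ)⁻¹ ^ T.dist x v * treeGreen T d u z)

theorem cycleGreen_comm (x z : W) : cycleGreen T d u v x z = cycleGreen T d v u x z := by
  unfold cycleGreen
  rw [dist_comm (u := u) (v := v)]
  ring

theorem inv_sub_one_pow_lt_one (hd : 3 ≤ d) (n : ℕ) : (d - 1 : ℝ)⁻¹ ^ (n + 1) < 1 :=
  have ⟨hq₀, hq₁⟩ := inv_sub_one_mem_Ioc hd
  pow_lt_one₀ hq₀.le (by linarith) n.succ_ne_zero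

theorem cycleGreen_nonneg (hd : 3 ≤ d) (x z : W) : 0 ≤ cycleGreen T d u v x z := by
  have hq := (inv_sub_one_mem_Ioc hd).1.le
  have hQ := sub_nonneg.2 (inv_sub_one_pow_lt_one hd (T.dist u v)).le
  have hT := treeGreen_nonneg (H := T) (d := d) (by lia)
  unfold cycleGreen
  have := hT x z
  have := hT v z
  have := hT u z
  positivity

theorem sum_neighborFinset_cycleGreen [T.LocallyFinite] (hT : T.IsTree) (hd : 3 ≤ d) (x z : W) :
    ∑ w ∈ T.neighborFinset z, cycleGreen T d u v x w =
      (d - (d - T.degree z) / (d - 1)) * cycleGreen T d u v x z -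
        d * ((if z = x then 1 else 0) +
          (d - 1 : ℝ)⁻¹ / (1 - (d - 1 : ℝ)⁻¹ ^ (T.dist u v + 1)) *
            ((d - 1 : ℝ)⁻¹ ^ T.dist x u * (if z = v then 1 else 0) +
              (d - 1 : ℝ)⁻¹ ^ T.dist x v * (if z = u then 1 else 0))) := by
  simp only [cycleGreen, Finset.sum_add_distrib, ← Finset.mul_sum,
    sum_neighborFinset_treeGreen hT hd]
  split_ifs <;> ring

theorem cycleGreen_sub_inv_mul (hd : 3 ≤ d) (x : W) :
    cycleGreen T d u v x v - (d - 1 : ℝ)⁻¹ * cycleGreen T d u v x u =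
      d * ((d - 1 : ℝ)⁻¹ / (1 - (d - 1 : ℝ)⁻¹ ^ (T.dist u v + 1)) *
        (d - 1 : ℝ)⁻¹ ^ T.dist x v) := by
  have hd' : (3 : ℝ) ≤ d := by exact_mod_cast hd
  have h₁ : (d : ℝ) - 1 ≠ 0 := by linarith
  have h₂ : (d : ℝ) - 2 ≠ 0 := by linarith
  have hQ := sub_ne_zero.2 (inv_sub_one_pow_lt_one hd (T.dist u v)).ne'
  unfold cycleGreen treeGreen
  rw [dist_self, dist_self, dist_comm (u := v) (v := u)]
  rw [pow_succ] at hQ ⊢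
  generalize (d - 1 : ℝ)⁻¹ ^ T.dist u v = s at hQ ⊢
  have hs : (d : ℝ) - 1 - s ≠ 0 := fun h =>
    hQ (by rw [← sub_eq_zero.1 h, mul_inv_cancel₀ h₁, sub_self])
  field_simp
  ring

theorem neighborFinset_eq_insert [T.LocallyFinite] [H.LocallyFinite] (hH : H = T ⊔ edge u v)
    (huv : u ≠ v) : H.neighborFinset u = insert v (T.neighborFinset u) := by
  ext w
  simp only [hH, mem_neighborFinset, sup_adj, edge_adj, Finset.mem_insert]
  grind

theorem neighborFinset_eq_of_ne [T.LocallyFinite] [H.LocallyFinite] (hH : H = T ⊔ edge u v) {z : W}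
    (hu : z ≠ u) (hv : z ≠ v) : H.neighborFinset z = T.neighborFinset z := by
  ext w
  simp [hH, edge_adj, hu, hv]

theorem sum_neighborFinset_cycleGreen_left_le [T.LocallyFinite] [H.LocallyFinite]
    (hT : T.IsTree) (hH : H = T ⊔ edge u v) (hd : 3 ≤ d) (huv : u ≠ v) (hadj : ¬T.Adj u v)
    (hdeg : H.degree u ≤ d) (x : W) :
    ∑ w ∈ H.neighborFinset u, cycleGreen T d u v x w ≤
      d * cycleGreen T d u v x u - if u = x then (d : ℝ) else 0 := by
  have hd' : (3 : ℝ) ≤ d := by exact_mod_cast hd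
  have hv : v ∉ T.neighborFinset u := by rwa [mem_neighborFinset]
  have hdegT : (T.degree u : ℝ) + 1 ≤ d := by
    rw [degree, neighborFinset_eq_insert hH huv, Finset.card_insert_of_notMem hv] at hdeg
    exact_mod_cast hdeg
  have hloss : (d - 1 : ℝ)⁻¹ ≤ (d - T.degree u) / (d - 1) := by
    rw [inv_eq_one_div]
    gcongr <;> linarith
  have hloss_mul := mul_le_mul_of_nonneg_right hloss
    (cycleGreen_nonneg (T := T) (u := u) (v := v) hd x u)
  have hv_sub := cycleGreen_sub_inv_mul (T := T) (u := u) (v := v) hd x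
  rw [neighborFinset_eq_insert hH huv, Finset.sum_insert hv,
    sum_neighborFinset_cycleGreen hT hd, if_neg huv, if_pos rfl]
  split_ifs <;> linarith

theorem isGreenSupersolution_cycleGreen [T.LocallyFinite] [H.LocallyFinite]
    (hT : T.IsTree) (hH : H = T ⊔ edge u v) (hd : 3 ≤ d) (huv : u ≠ v) (hadj : ¬T.Adj u v)
    (hdeg : ∀ z, H.degree z ≤ d) (x : W) :
    IsGreenSupersolution H d x (cycleGreen T d u v x) where
  nonneg := cycleGreen_nonneg hd x
  le z := by
    have hd' : (3 : ℝ) ≤ d := by exact_mod_cast hd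
    suffices h : ∑ w ∈ H.neighborFinset z, cycleGreen T d u v x w ≤
        d * cycleGreen T d u v x z - if z = x then (d : ℝ) else 0 by
      grw [h]
      field_simp
      split_ifs <;> linarith
    by_cases hzu : z = u
    · subst hzu
      exact sum_neighborFinset_cycleGreen_left_le hT hH hd huv hadj (hdeg z) x
    by_cases hzv : z = v
    · subst hzv
      simp only [cycleGreen_comm (u := u)]
      exact sum_neighborFinset_cycleGreen_left_le hT (hH.trans (by rw [edge_comm])) hd huv.symm
        (fun h => hadj h.symm) (hdeg z) x
    have hdz : (T.degree z : ℝ) ≤ d := by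
      rw [degree, ← neighborFinset_eq_of_ne hH hzu hzv]
      exact_mod_cast hdeg z
    have hloss : 0 ≤ (d - T.degree z) / ((d : ℝ) - 1) * cycleGreen T d u v x z :=
      mul_nonneg (div_nonneg (by linarith) (by linarith)) (cycleGreen_nonneg hd x z)
    rw [neighborFinset_eq_of_ne hH hzu hzv, sum_neighborFinset_cycleGreen hT hd,
      if_neg hzu, if_neg hzv]
    split_ifs <;> linarith

theorem dist_le_dist_add_one_add_dist (hT : T.Connected) (hH : H = T ⊔ edge u v) (huv : u ≠ v)
    (x z : W) : H.dist x z ≤ T.dist x u + 1 + T.dist v z := by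
  have hTH : T ≤ H := hH ▸ le_sup_left
  have hadj : H.Adj u v := by simp [hH, edge_adj, huv]
  have hHc := hT.mono hTH
  calc H.dist x z ≤ H.dist x u + H.dist u v + H.dist v z :=
        hHc.dist_triangle.trans (by grw [hHc.dist_triangle])
    _ = H.dist x u + 1 + H.dist v z := by rw [dist_eq_one_iff_adj.2 hadj]
    _ ≤ T.dist x u + 1 + T.dist v z := by
        grw [(hT.preconnected x u).dist_anti hTH, (hT.preconnected v z).dist_anti hTH]

theorem cycleGreen_le_of_dist_add_dist_le (hT : T.Connected) (hH : H = T ⊔ edge u v) (hd : 3 ≤ d)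
    (huv : u ≠ v) {x z : W}
    (hxz : T.dist x z + T.dist u v ≤ T.dist x u + T.dist v z) :
    cycleGreen T d u v x z ≤
      2 / (1 - (d - 1 : ℝ)⁻¹ ^ (T.dist u v + 1)) * treeGreen H d x z := by
  have hd' : (3 : ℝ) ≤ d := by exact_mod_cast hd
  obtain ⟨hq₀, hq₁⟩ := inv_sub_one_mem_Ioc hd
  have hQ := sub_pos.2 (inv_sub_one_pow_lt_one hd (T.dist u v))
  have hg : 0 ≤ ((d : ℝ) - 1) / (d - 2) := div_nonneg (by linarith) (by linarith)
  have pow_le {m n : ℕ} (hmn : n ≤ m) : (d - 1 : ℝ)⁻¹ ^ m ≤ (d - 1 : ℝ)⁻¹ ^ n :=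
    pow_le_pow_of_le_one hq₀.le (by linarith) hmn
  have hdirect := pow_le ((hT.preconnected x z).dist_anti (hH ▸ le_sup_left : T ≤ H))
  have hlong := pow_le (show T.dist x z + (T.dist u v + 1) ≤ T.dist x u + 1 + T.dist v z by lia)
  have hshort := pow_le (dist_le_dist_add_one_add_dist hT (hH.trans (by rw [edge_comm])) huv.symm
    x z)
  rw [pow_add _ (T.dist x z)] at hlong
  calc cycleGreen T d u v x z
      = ((d - 1) / (d - 2)) / (1 - (d - 1 : ℝ)⁻¹ ^ (T.dist u v + 1)) *
          ((1 - (d - 1 : ℝ)⁻¹ ^ (T.dist u v + 1)) * (d - 1 : ℝ)⁻¹ ^ T.dist x z +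
            (d - 1 : ℝ)⁻¹ ^ (T.dist x u + 1 + T.dist v z) +
            (d - 1 : ℝ)⁻¹ ^ (T.dist x v + 1 + T.dist u z)) := by
        unfold cycleGreen treeGreen
        generalize (d - 1 : ℝ)⁻¹ = q at hQ ⊢
        have := hQ.ne'
        field_simp
        ring
    _ ≤ ((d - 1) / (d - 2)) / (1 - (d - 1 : ℝ)⁻¹ ^ (T.dist u v + 1)) *
          (2 * (d - 1 : ℝ)⁻¹ ^ H.dist x z) := by
        gcongr
        linarith
    _ = 2 / (1 - (d - 1 : ℝ)⁻¹ ^ (T.dist u v + 1)) * treeGreen H d x z := by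
        unfold treeGreen
        ring

theorem cycleGreen_le (hT : T.IsTree) (hH : H = T ⊔ edge u v) (hd : 3 ≤ d) (huv : u ≠ v)
    (hadj : ¬T.Adj u v) (x z : W) :
    cycleGreen T d u v x z ≤ 16 / 7 * treeGreen H d x z := by
  have hdist : 2 ≤ T.dist u v := hT.connected.one_lt_dist_of_ne_of_not_adj huv hadj
  obtain ⟨hq₀, hq₁⟩ := inv_sub_one_mem_Ioc hd
  have hQ : (d - 1 : ℝ)⁻¹ ^ (T.dist u v + 1) ≤ 1 / 8 :=
    calc (d - 1 : ℝ)⁻¹ ^ (T.dist u v + 1) ≤ (d - 1 : ℝ)⁻¹ ^ 3 :=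
          pow_le_pow_of_le_one hq₀.le (by linarith) (by lia)
      _ ≤ (1 / 2) ^ 3 := by gcongr
      _ = 1 / 8 := by norm_num
  have hcoeff : 2 / (1 - (d - 1 : ℝ)⁻¹ ^ (T.dist u v + 1)) ≤ 16 / 7 := by
    rw [div_le_iff₀ (by linarith)]
    linarith
  refine le_trans ?_ (mul_le_mul_of_nonneg_right hcoeff (treeGreen_nonneg (by lia) x z))
  rcases dist_add_dist_le_or_le hT u v x z with h | h
  · refine cycleGreen_le_of_dist_add_dist_le hT.connected hH hd huv ?_
    rwa [dist_comm (u := x), dist_comm (u := x)]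
  · rw [cycleGreen_comm, dist_comm (u := u)]
    refine cycleGreen_le_of_dist_add_dist_le hT.connected (hH.trans (by rw [edge_comm])) hd
      huv.symm ?_
    rwa [dist_comm (u := x), dist_comm (u := x), dist_comm (u := v) (v := u)]

theorem exists_isGreenSupersolution_le [Finite W] [H.LocallyFinite] (hH : H.Connected) (hd : 3 ≤ d)
    (hdeg : ∀ z, H.degree z ≤ d) (hcard : Nat.card H.edgeSet ≤ Nat.card W) (x : W) :
    ∃ f, IsGreenSupersolution H d x f ∧ ∀ z, f z ≤ 16 / 7 * treeGreen H d x z := by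
  rcases isTree_or_exists_eq_sup_edge hH hcard with hT | ⟨T, u, v, hT, huv, hadj, hHT⟩
  · refine ⟨_, isGreenSupersolution_treeGreen hT hd hdeg x, fun z => ?_⟩
    exact le_mul_of_one_le_left (treeGreen_nonneg (by lia) x z) (by norm_num)
  · have : T.LocallyFinite := fun _ => Fintype.ofFinite _
    exact ⟨_, isGreenSupersolution_cycleGreen hT hHT hd huv hadj hdeg x,
      cycleGreen_le hT hHT hd huv hadj x⟩

end CycleGreen

section InducedBall

variable {V : Type*} {G : SimpleGraph V}

theorem connected_induce_gball (hG : G.Connected) (x : V) (R : ℕ) :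
    (G.induce (gball G x R)).Connected := by
  rw [connected_iff_exists_forall_reachable]
  refine ⟨⟨x, by simp [gball]⟩, fun ⟨z, (hz : G.dist x z ≤ R)⟩ => ?_⟩
  obtain ⟨p, hp⟩ := hG.exists_walk_length_eq_dist x z
  refine ⟨p.induce _ fun w hw => ?_⟩
  calc G.dist x w ≤ (p.takeUntil w hw).length := dist_le _
    _ ≤ p.length := p.length_takeUntil_le_length hw
    _ ≤ R := hp.trans_le hz

theorem dist_le_dist_induce {B : Set V} (hB : (G.induce B).Connected) (x y : B) :
    G.dist x y ≤ (G.induce B).dist x y := by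
  obtain ⟨p, hp⟩ := hB.exists_walk_length_eq_dist x y
  rw [← hp, ← Walk.length_map (Embedding.induce (G := G) B).toHom]
  exact dist_le _

theorem adjPairs_eq_two_mul_card_edgeSet (G : SimpleGraph V) (B : Set V) [Finite B] :
    adjPairs G B = 2 * Nat.card (G.induce B).edgeSet := by
  have := Fintype.ofFinite B
  have himage : {p : V × V | p.1 ∈ B ∧ p.2 ∈ B ∧ G.Adj p.1 p.2} =
      Prod.map (↑) (↑) '' {p : B × B | (G.induce B).Adj p.1 p.2} := by
    ext ⟨a, b⟩
    simp
    tauto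
  rw [adjPairs, himage,
    Set.ncard_image_of_injective _ (Subtype.val_injective.prodMap Subtype.val_injective),
    Nat.card_eq_fintype_card, ← edgeFinset_card, two_mul_card_edgeFinset,
    Set.ncard_eq_toFinset_card', Set.toFinset_ofPred]

theorem sum_neighborFinset_induce [G.LocallyFinite] {B : Set V} [(G.induce B).LocallyFinite]
    {M : Type*} [AddCommMonoid M] {φ : V → M} (hφ : ∀ w ∉ B, φ w = 0) (z : B) :
    ∑ w ∈ (G.induce B).neighborFinset z, φ w = ∑ w ∈ G.neighborFinset z, φ w := by
  refine Finset.sum_of_injOn (↑) Subtype.val_injective.injOn ?_ ?_ fun _ _ => rfl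
  · simp [Set.MapsTo]
  · intro w hw hwB
    refine hφ w fun hw' => hwB ⟨⟨w, hw'⟩, ?_, rfl⟩
    simpa using hw

theorem degree_induce_le [G.LocallyFinite] {B : Set V} [(G.induce B).LocallyFinite] (z : B) :
    (G.induce B).degree z ≤ G.degree z := by
  refine Finset.card_le_card_of_injOn (↑) ?_ Subtype.val_injective.injOn
  simp [Set.MapsTo]

end InducedBall

section SimpleRandomWalk

variable {V : Type*} {G : SimpleGraph V} {d : ℕ}

theorem degree_eq_of_isReg (hreg : IsReg G d) (z : V) [Fintype (G.neighborSet z)] :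
    G.degree z = d := by
  rw [← hreg z, Nat.card_eq_fintype_card, card_neighborSet_eq_degree]

variable [Fintype V]

theorem transP_eq_smul_adjMatrix [DecidableRel G.Adj] (d : ℕ) :
    transP G d = (d : ℝ)⁻¹ • G.adjMatrix ℝ := by
  ext u v
  simp [transP]

theorem transP_mem_rowStochastic (hreg : IsReg G d) (hd : d ≠ 0) :
    transP G d ∈ Matrix.rowStochastic ℝ V := by
  rw [Matrix.mem_rowStochastic_iff_sum]
  refine ⟨fun u v => ?_, fun u => ?_⟩
  · rw [transP, Matrix.of_apply]
    positivity
  · have hdeg : ∑ v, (if G.Adj u v then 1 else 0 : ℝ) = d := by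
      rw [← degree_eq_sum_if_adj, degree_eq_of_isReg hreg]
    have hd' : (d : ℝ) ≠ 0 := Nat.cast_ne_zero.2 hd
    rw [← inv_mul_cancel₀ hd', ← hdeg, Finset.mul_sum]
    simp [transP, hdeg]

theorem transP_pow_apply_eq_zero {k : ℕ} {x y : V} (h : k < G.dist x y) :
    (transP G d ^ k) x y = 0 := by
  have hempty : IsEmpty {p : G.Walk x y | p.length = k} :=
    ⟨fun ⟨p, (hp : p.length = k)⟩ => (dist_le p).not_gt (hp ▸ h)⟩
  rw [transP_eq_smul_adjMatrix, smul_pow, Matrix.smul_apply, adjMatrix_pow_apply_eq_card_walk,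
    Fintype.card_eq_zero, Nat.cast_zero, smul_zero]

/-- The expected number of visits to `z` before time `n` of the discrete-time walk from `x`. -/
noncomputable def expectedVisits (G : SimpleGraph V) (d n : ℕ) (x z : V) : ℝ :=
  ∑ k ∈ Finset.range n, (transP G d ^ k) x z

theorem expectedVisits_eq_zero {n : ℕ} {x z : V} (h : n ≤ G.dist x z) :
    expectedVisits G d n x z = 0 :=
  Finset.sum_eq_zero fun _ hk => transP_pow_apply_eq_zero ((Finset.mem_range.1 hk).trans_le h)

theorem expectedVisits_succ [DecidableRel G.Adj] (n : ℕ) (x z : V) :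
    expectedVisits G d (n + 1) x z =
      (if z = x then 1 else 0) +
        (d : ℝ)⁻¹ * ∑ w ∈ G.neighborFinset z, expectedVisits G d n x w := by
  have hstep (k : ℕ) : (transP G d ^ (k + 1)) x z =
      (d : ℝ)⁻¹ * ∑ w ∈ G.neighborFinset z, (transP G d ^ k) x w := by
    rw [pow_succ]
    nth_rw 2 [transP_eq_smul_adjMatrix]
    rw [Matrix.mul_smul, Matrix.smul_apply, mul_adjMatrix_apply, smul_eq_mul]
  simp only [expectedVisits]
  rw [Finset.sum_range_succ', Finset.sum_comm, Finset.mul_sum]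
  simp only [hstep, pow_zero, Matrix.one_apply, eq_comm (a := z), add_comm]

theorem expectedVisits_le_of_isGreenSupersolution {B : Set V} [(G.induce B).LocallyFinite] {x : B}
    {f : B → ℝ} (hf : IsGreenSupersolution (G.induce B) d x f) {n : ℕ}
    (hn : ∀ w ∉ B, n ≤ G.dist x w) (z : B) : expectedVisits G d n x z ≤ f z := by
  induction n generalizing z with
  | zero => simpa [expectedVisits] using hf.nonneg z
  | succ n ih =>
    have hn' : ∀ w ∉ B, n ≤ G.dist x w := fun w hw => (Nat.le_succ n).trans (hn w hw)
    refine le_trans ?_ (hf.le z)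
    rw [expectedVisits_succ,
      ← sum_neighborFinset_induce fun w hw => expectedVisits_eq_zero (hn' w hw)]
    gcongr
    · simp only [Subtype.ext_iff, le_refl]
    · exact ih hn' _

theorem expectedVisits_le_treeGreen (hG : G.Connected) (hd : 3 ≤ d) (hreg : IsReg G d) (x y : V)
    {R : ℕ} (hcyc : adjPairs G (gball G x R) ≤ 2 * (gball G x R).ncard) :
    expectedVisits G d (R + 1) x y ≤ 16 / 7 * treeGreen G d x y := by
  have hdist : ∀ w ∉ gball G x R, R + 1 ≤ G.dist x w := fun w hw => Nat.succ_le_of_lt (not_le.1 hw)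
  by_cases hy : y ∈ gball G x R
  · set B := gball G x R
    have hx : x ∈ B := by simp [B, gball]
    have hconn : (G.induce B).Connected := connected_induce_gball hG x R
    have hcard : Nat.card (G.induce B).edgeSet ≤ Nat.card B := by
      rw [adjPairs_eq_two_mul_card_edgeSet] at hcyc
      rw [Nat.card_coe_set_eq B]
      lia
    obtain ⟨f, hf, hfB⟩ := exists_isGreenSupersolution_le hconn hd
      (fun z => (degree_induce_le z).trans_eq (degree_eq_of_isReg hreg z)) hcard ⟨x, hx⟩
    calc expectedVisits G d (R + 1) x y ≤ f ⟨y, hy⟩ :=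
          expectedVisits_le_of_isGreenSupersolution hf hdist ⟨y, hy⟩
      _ ≤ 16 / 7 * treeGreen (G.induce B) d ⟨x, hx⟩ ⟨y, hy⟩ := hfB ⟨y, hy⟩
      _ ≤ 16 / 7 * treeGreen G d x y := by
          gcongr
          exact treeGreen_le_treeGreen_of_dist_le hd (dist_le_dist_induce hconn ⟨x, hx⟩ ⟨y, hy⟩)
  · rw [expectedVisits_eq_zero (hdist y hy)]
    exact mul_nonneg (by norm_num) (treeGreen_nonneg (by lia) x y)

end SimpleRandomWalk

section PoissonClock

/-- The probability that a Poisson variable of mean `t` equals `k`, for real `t` so that it can be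
integrated over time; these are the jump-count probabilities appearing in `heatK`. -/
noncomputable def poissonWeight (t : ℝ) (k : ℕ) : ℝ := Real.exp (-t) * t ^ k / k.factorial

theorem poissonWeight_nonneg {t : ℝ} (ht : 0 ≤ t) (k : ℕ) : 0 ≤ poissonWeight t k := by
  unfold poissonWeight
  positivity

theorem hasSum_poissonWeight_mul_pow (t s : ℝ) :
    HasSum (fun k => poissonWeight t k * s ^ k) (Real.exp (-t + t * s)) := by
  have h := (NormedSpace.expSeries_div_hasSum_exp (t * s)).mul_left (Real.exp (-t))
  rw [← Real.exp_eq_exp_ℝ, ← Real.exp_add] at h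
  refine h.congr_fun fun k => ?_
  rw [poissonWeight, mul_pow]
  ring

theorem summable_poissonWeight (t : ℝ) : Summable (poissonWeight t) := by
  simpa using (hasSum_poissonWeight_mul_pow t 1).summable

theorem integrableOn_poissonWeight (k : ℕ) :
    IntegrableOn (fun t => poissonWeight t k) (Ioi 0) := by
  have h := Real.GammaIntegral_convergent (s := k + 1) (by positivity)
  simp only [add_sub_cancel_right, Real.rpow_natCast] at h
  exact h.div_const _

theorem integral_poissonWeight (k : ℕ) : ∫ t in Ioi 0, poissonWeight t k = 1 := by
  have h := Real.Gamma_eq_integral (s := k + 1) (by positivity)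
  simp only [Real.Gamma_nat_eq_factorial, add_sub_cancel_right, Real.rpow_natCast] at h
  simp only [poissonWeight]
  rw [integral_div, ← h, div_self (Nat.cast_ne_zero.2 k.factorial_ne_zero)]

theorem integral_Ioc_poissonWeight_le_one (T : ℝ) (k : ℕ) :
    ∫ t in Ioc 0 T, poissonWeight t k ≤ 1 := by
  rw [← integral_poissonWeight k]
  refine setIntegral_mono_set (integrableOn_poissonWeight k) ?_ Ioc_subset_Ioi_self.eventuallyLE
  filter_upwards [ae_restrict_mem measurableSet_Ioi] with t ht
  exact poissonWeight_nonneg (le_of_lt ht) k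

theorem tsum_poissonWeight_nat_add_le {t T : ℝ} (ht : 0 ≤ t) (htT : t ≤ T) {n : ℕ}
    (hn : Real.exp 1 * T ≤ n) : ∑' k, poissonWeight t (k + n) ≤ Real.exp (-T) := by
  have hw := poissonWeight_nonneg ht
  have hexp := (hasSum_poissonWeight_mul_pow t (Real.exp 1)).mul_right (Real.exp (-n))
  -- Chernoff: the indicator of `n ≤ k` is at most `exp (k - n)`.
  calc ∑' k, poissonWeight t (k + n)
      ≤ ∑' k, poissonWeight t (k + n) * Real.exp 1 ^ (k + n) * Real.exp (-n) := by
        refine ((summable_nat_add_iff n).2 (summable_poissonWeight t)).tsum_le_tsum (fun k => ?_)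
          ((summable_nat_add_iff n).2 hexp.summable)
        rw [mul_assoc, ← Real.exp_nat_mul, ← Real.exp_add]
        refine le_mul_of_one_le_right (hw _) (Real.one_le_exp ?_)
        push_cast
        linarith [k.cast_nonneg (α := ℝ)]
    _ ≤ ∑' k, poissonWeight t k * Real.exp 1 ^ k * Real.exp (-n) := by
        rw [← hexp.summable.sum_add_tsum_nat_add n]
        refine le_add_of_nonneg_left (Finset.sum_nonneg fun k _ => ?_)
        have := hw k
        positivity
    _ = Real.exp (-t + t * Real.exp 1 + -n) := by rw [hexp.tsum_eq, ← Real.exp_add]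
    _ ≤ Real.exp (-T) := by
        have : 1 ≤ Real.exp 1 := Real.one_le_exp zero_le_one
        gcongr
        nlinarith

theorem tsum_poissonWeight_mul_le {a : ℕ → ℝ} (ha₀ : ∀ k, 0 ≤ a k) (ha₁ : ∀ k, a k ≤ 1) {t T : ℝ}
    (ht : 0 ≤ t) (htT : t ≤ T) {n : ℕ} (hn : Real.exp 1 * T ≤ n) :
    ∑' k, poissonWeight t k * a k ≤
      ∑ k ∈ Finset.range n, poissonWeight t k * a k + Real.exp (-T) := by
  have hle (k : ℕ) : poissonWeight t k * a k ≤ poissonWeight t k :=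
    mul_le_of_le_one_right (poissonWeight_nonneg ht k) (ha₁ k)
  have hsum : Summable fun k => poissonWeight t k * a k :=
    (summable_poissonWeight t).of_nonneg_of_le
      (fun k => mul_nonneg (poissonWeight_nonneg ht k) (ha₀ k)) hle
  rw [← hsum.sum_add_tsum_nat_add n]
  gcongr
  exact (((summable_nat_add_iff n).2 hsum).tsum_le_tsum (fun k => hle (k + n))
    ((summable_nat_add_iff n).2 (summable_poissonWeight t))).trans
      (tsum_poissonWeight_nat_add_le ht htT hn)

end PoissonClock

section ShortTime

variable {V : Type*} [Fintype V] {G : SimpleGraph V} {d : ℕ}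

theorem heatK_le_sum_range (hreg : IsReg G d) (hd : d ≠ 0) (x y : V) {t T : ℝ} (ht : 0 ≤ t)
    (htT : t ≤ T) {n : ℕ} (hn : Real.exp 1 * T ≤ n) :
    heatK G d t x y ≤
      ∑ k ∈ Finset.range n, poissonWeight t k * (transP G d ^ k) x y + Real.exp (-T) := by
  have hP (k : ℕ) := pow_mem (transP_mem_rowStochastic hreg hd) k
  exact tsum_poissonWeight_mul_le (fun k => Matrix.nonneg_of_mem_rowStochastic (hP k))
    (fun k => Matrix.le_one_of_mem_rowStochastic (hP k)) ht htT hn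

theorem setIntegral_Ioc_heatK_le (hreg : IsReg G d) (hd : d ≠ 0) (x y : V) {T : ℝ} (hT : 0 ≤ T)
    {n : ℕ} (hn : Real.exp 1 * T ≤ n) (hint : IntegrableOn (fun t => heatK G d t x y) (Ioc 0 T)) :
    ∫ t in Ioc 0 T, heatK G d t x y ≤ expectedVisits G d n x y + T * Real.exp (-T) := by
  have hterm (k : ℕ) :
      IntegrableOn (fun t => poissonWeight t k * (transP G d ^ k) x y) (Ioc 0 T) :=
    ((integrableOn_poissonWeight k).mono_set Ioc_subset_Ioi_self).mul_const _
  have hsum : IntegrableOn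
      (fun t => ∑ k ∈ Finset.range n, poissonWeight t k * (transP G d ^ k) x y) (Ioc 0 T) :=
    integrable_finsetSum _ fun k _ => hterm k
  have hconst : IntegrableOn (fun _ => Real.exp (-T)) (Ioc 0 T) := by simp
  calc ∫ t in Ioc 0 T, heatK G d t x y
      ≤ ∫ t in Ioc 0 T, (∑ k ∈ Finset.range n, poissonWeight t k * (transP G d ^ k) x y +
          Real.exp (-T)) :=
        setIntegral_mono_on hint (hsum.add hconst) measurableSet_Ioc fun t ht =>
          heatK_le_sum_range hreg hd x y ht.1.le ht.2 hn
    _ = ∑ k ∈ Finset.range n, (∫ t in Ioc 0 T, poissonWeight t k) * (transP G d ^ k) x y +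
          T * Real.exp (-T) := by
        rw [integral_add hsum hconst, integral_finsetSum _ fun k _ => hterm k]
        simp [integral_mul_const, hT]
    _ ≤ expectedVisits G d n x y + T * Real.exp (-T) := by
        unfold expectedVisits
        gcongr with k
        refine mul_le_of_le_one_left (Matrix.nonneg_of_mem_rowStochastic ?_)
          (integral_Ioc_poissonWeight_le_one T k)
        exact pow_mem (transP_mem_rowStochastic hreg hd) k

end ShortTime

section SpectralDecomposition

variable {n : Type*} [Fintype n] {A : Matrix n n ℝ}

theorem pow_apply_eq_sum_eigenvalues {𝕜 : Type*} [RCLike 𝕜] {A : Matrix n n 𝕜}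
    (hA : A.IsHermitian) (k : ℕ) (x y : n) :
    (A ^ k) x y = ∑ i, (hA.eigenvalues i : 𝕜) ^ k *
      (hA.eigenvectorBasis i x * star (hA.eigenvectorBasis i y)) := by
  conv_lhs => rw [hA.spectral_theorem]
  rw [← map_pow, Matrix.diagonal_pow, Unitary.conjStarAlgAut_apply, Matrix.mul_apply]
  refine Finset.sum_congr rfl fun i _ => ?_
  simp [Matrix.star_apply]
  ring

theorem sum_eigenvectorBasis_mul (hA : A.IsHermitian) (x y : n) :
    ∑ i, hA.eigenvectorBasis i x * hA.eigenvectorBasis i y = if x = y then 1 else 0 := by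
  simpa [Matrix.one_apply] using (pow_apply_eq_sum_eigenvalues hA 0 x y).symm

theorem sum_abs_eigenvectorBasis_mul_le_one (hA : A.IsHermitian) (x y : n) :
    ∑ i, |hA.eigenvectorBasis i x * hA.eigenvectorBasis i y| ≤ 1 := by
  calc ∑ i, |hA.eigenvectorBasis i x * hA.eigenvectorBasis i y|
      ≤ ∑ i, (hA.eigenvectorBasis i x * hA.eigenvectorBasis i x +
          hA.eigenvectorBasis i y * hA.eigenvectorBasis i y) / 2 := by
        refine Finset.sum_le_sum fun i _ => abs_le.2 ⟨?_, ?_⟩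
        · nlinarith [sq_nonneg (hA.eigenvectorBasis i x + hA.eigenvectorBasis i y)]
        · nlinarith [sq_nonneg (hA.eigenvectorBasis i x - hA.eigenvectorBasis i y)]
    _ = 1 := by
        rw [← Finset.sum_div, Finset.sum_add_distrib, sum_eigenvectorBasis_mul,
          sum_eigenvectorBasis_mul]
        norm_num

theorem sum_eq_zero_of_mulVec_eq_smul (hA : A ∈ Matrix.colStochastic ℝ n) {f : n → ℝ} {c : ℝ}
    (hf : A.mulVec f = c • f) (hc : c ≠ 1) : ∑ x, f x = 0 := by
  have h : ∑ x, f x = c * ∑ x, f x := by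
    calc ∑ x, f x = 1 ⬝ᵥ A.mulVec f := by
          rw [Matrix.dotProduct_mulVec, (Matrix.mem_colStochastic.1 hA).2, one_dotProduct]
      _ = c * ∑ x, f x := by rw [hf, dotProduct_smul, one_dotProduct, smul_eq_mul]
  have : (c - 1) * ∑ x, f x = 0 := by linarith
  exact (mul_eq_zero.1 this).resolve_left (sub_ne_zero.2 hc)

theorem sum_eigenvectorBasis_mul_of_eigenvalue_eq_one (hA : A.IsHermitian)
    (hcol : A ∈ Matrix.colStochastic ℝ n)
    (hconst : ∀ f : n → ℝ, A.mulVec f = f → ∀ x y, f x = f y) (x y : n) :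
    ∑ i with hA.eigenvalues i = 1, hA.eigenvectorBasis i x * hA.eigenvectorBasis i y =
      1 / Nat.card n := by
  have : Nonempty n := ⟨x⟩
  have hsum (i : n) : (∑ z, hA.eigenvectorBasis i z) * hA.eigenvectorBasis i y =
      if hA.eigenvalues i = 1 then
        Nat.card n * (hA.eigenvectorBasis i x * hA.eigenvectorBasis i y) else 0 := by
    have hi := hA.mulVec_eigenvectorBasis i
    split_ifs with h
    · rw [h, one_smul] at hi
      rw [Finset.sum_congr rfl fun z _ => hconst _ hi z x]
      simp [mul_assoc]
    · rw [sum_eq_zero_of_mulVec_eq_smul hcol hi h, zero_mul]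
  have hone : ∑ i, (∑ z, hA.eigenvectorBasis i z) * hA.eigenvectorBasis i y = 1 := by
    simp only [Finset.sum_mul]
    rw [Finset.sum_comm]
    simp [sum_eigenvectorBasis_mul]
  simp only [hsum, ← Finset.sum_filter, ← Finset.mul_sum] at hone
  rw [eq_div_iff (by simp), mul_comm, hone]

theorem hasSum_poissonWeight_mul_pow_apply (hA : A.IsHermitian) (t : ℝ) (x y : n) :
    HasSum (fun k => poissonWeight t k * (A ^ k) x y)
      (∑ i, Real.exp (-t + t * hA.eigenvalues i) *
        (hA.eigenvectorBasis i x * hA.eigenvectorBasis i y)) := by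
  have hterm (k : ℕ) : poissonWeight t k * (A ^ k) x y =
      ∑ i, poissonWeight t k * hA.eigenvalues i ^ k *
        (hA.eigenvectorBasis i x * hA.eigenvectorBasis i y) := by
    simp [pow_apply_eq_sum_eigenvalues hA, Finset.mul_sum, mul_assoc]
  simp only [hterm]
  exact hasSum_sum fun i _ => (hasSum_poissonWeight_mul_pow t _).mul_right _

theorem abs_tsum_poissonWeight_mul_pow_apply_sub_le (hA : A.IsHermitian)
    (hcol : A ∈ Matrix.colStochastic ℝ n)
    (hconst : ∀ f : n → ℝ, A.mulVec f = f → ∀ x y, f x = f y) {β : ℝ}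
    (hgap : ∀ i, hA.eigenvalues i = 1 ∨ β ≤ 1 - hA.eigenvalues i) {t : ℝ} (ht : 0 ≤ t) (x y : n) :
    |∑' k, poissonWeight t k * (A ^ k) x y - 1 / Nat.card n| ≤ Real.exp (-β * t) := by
  set w : n → ℝ := fun i => hA.eigenvectorBasis i x * hA.eigenvectorBasis i y
  have hsplit : ∑' k, poissonWeight t k * (A ^ k) x y - 1 / Nat.card n =
      ∑ i with hA.eigenvalues i ≠ 1, Real.exp (-t + t * hA.eigenvalues i) * w i := by
    rw [(hasSum_poissonWeight_mul_pow_apply hA t x y).tsum_eq,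
      ← sum_eigenvectorBasis_mul_of_eigenvalue_eq_one hA hcol hconst x y, sub_eq_iff_eq_add',
      ← Finset.sum_filter_add_sum_filter_not _ fun i => hA.eigenvalues i = 1]
    congr 1
    refine Finset.sum_congr rfl fun i hi => ?_
    rw [(Finset.mem_filter.1 hi).2, mul_one, neg_add_cancel, Real.exp_zero, one_mul]
  rw [hsplit]
  calc |∑ i with hA.eigenvalues i ≠ 1, Real.exp (-t + t * hA.eigenvalues i) * w i|
      ≤ ∑ i with hA.eigenvalues i ≠ 1, Real.exp (-t + t * hA.eigenvalues i) * |w i| := by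
        refine (Finset.abs_sum_le_sum_abs _ _).trans_eq ?_
        simp only [abs_mul, Real.abs_exp]
    _ ≤ ∑ i with hA.eigenvalues i ≠ 1, Real.exp (-β * t) * |w i| := by
        gcongr with i hi
        nlinarith [(hgap i).resolve_left (Finset.mem_filter.1 hi).2]
    _ ≤ ∑ i, Real.exp (-β * t) * |w i| :=
        Finset.sum_le_sum_of_subset_of_nonneg (Finset.filter_subset _ _) fun i _ _ => by positivity
    _ ≤ Real.exp (-β * t) := by
        rw [← Finset.mul_sum]
        exact mul_le_of_le_one_right (Real.exp_pos _).le
          (sum_abs_eigenvectorBasis_mul_le_one hA x y)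

end SpectralDecomposition

section LongTime

variable {V : Type*} [Fintype V] {G : SimpleGraph V} {d : ℕ} {β : ℝ}

theorem isHermitian_transP (G : SimpleGraph V) (d : ℕ) : (transP G d).IsHermitian := by
  ext u v
  simp [transP, G.adj_comm]

theorem eq_of_transP_mulVec_eq_self (hG : G.Connected) (hreg : IsReg G d) (hd : d ≠ 0) {f : V → ℝ}
    (hf : (transP G d).mulVec f = f) (x y : V) : f x = f y := by
  refine (lapMatrix_mulVec_eq_zero_iff_forall_reachable G).1 ?_ x y (hG x y)
  have hd' : (d : ℝ) ≠ 0 := Nat.cast_ne_zero.2 hd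
  ext z
  have hfz := congrFun hf z
  rw [transP_eq_smul_adjMatrix, Matrix.smul_mulVec, Pi.smul_apply, adjMatrix_mulVec_apply,
    smul_eq_mul, inv_mul_eq_iff_eq_mul₀ hd'] at hfz
  rw [lapMatrix_mulVec_apply, degree_eq_of_isReg hreg, hfz, sub_self, Pi.zero_apply]

theorem eigenvalues_transP_eq_one_or_le (hgap : SpectralGapLB G d β) (i : V) :
    (isHermitian_transP G d).eigenvalues i = 1 ∨
      β ≤ 1 - (isHermitian_transP G d).eigenvalues i := by
  set hP := isHermitian_transP G d
  have hmul : (1 - transP G d).mulVec (hP.eigenvectorBasis i) =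
      (1 - hP.eigenvalues i) • ⇑(hP.eigenvectorBasis i) := by
    rw [Matrix.sub_mulVec, Matrix.one_mulVec, hP.mulVec_eigenvectorBasis, sub_smul, one_smul]
  have hne : ⇑(hP.eigenvectorBasis i) ≠ 0 := fun h =>
    hP.eigenvectorBasis.orthonormal.ne_zero i (by ext z; exact congrFun h z)
  exact (hgap _ _ hmul hne).imp_left fun h => (sub_eq_zero.1 h).symm

theorem abs_heatK_sub_le (hG : G.Connected) (hreg : IsReg G d) (hd : d ≠ 0)
    (hgap : SpectralGapLB G d β) {t : ℝ} (ht : 0 ≤ t) (x y : V) :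
    |heatK G d t x y - 1 / Nat.card V| ≤ Real.exp (-β * t) := by
  have hP := isHermitian_transP G d
  have hcol : transP G d ∈ Matrix.colStochastic ℝ V := by
    rw [← Matrix.transpose_mem_rowStochastic_iff_mem_colStochastic,
      ← Matrix.conjTranspose_eq_transpose_of_trivial, hP.eq]
    exact transP_mem_rowStochastic hreg hd
  exact abs_tsum_poissonWeight_mul_pow_apply_sub_le hP hcol
    (fun _ => eq_of_transP_mulVec_eq_self hG hreg hd) (eigenvalues_transP_eq_one_or_le hgap) ht x y

theorem continuous_heatK (G : SimpleGraph V) (d : ℕ) (x y : V) :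
    Continuous fun t => heatK G d t x y := by
  have h (t : ℝ) := (hasSum_poissonWeight_mul_pow_apply (isHermitian_transP G d) t x y).tsum_eq
  refine Continuous.congr ?_ fun t => (h t).symm
  fun_prop

theorem integrableOn_heatK_sub (hG : G.Connected) (hreg : IsReg G d) (hd : d ≠ 0)
    (hgap : SpectralGapLB G d β) (hβ : 0 < β) (x y : V) :
    IntegrableOn (fun t => heatK G d t x y - 1 / Nat.card V) (Ioi 0) := by
  refine (integrableOn_exp_mul_Ioi (neg_neg_of_pos hβ) 0).mono'
    ((continuous_heatK G d x y).sub continuous_const).aestronglyMeasurable ?_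
  filter_upwards [ae_restrict_mem measurableSet_Ioi] with t ht
  exact abs_heatK_sub_le hG hreg hd hgap (le_of_lt ht) x y

theorem setIntegral_Ioi_heatK_sub_le (hG : G.Connected) (hreg : IsReg G d) (hd : d ≠ 0)
    (hgap : SpectralGapLB G d β) (hβ : 0 < β) (x y : V) {T : ℝ} (hT : 0 ≤ T) :
    ∫ t in Ioi T, (heatK G d t x y - 1 / Nat.card V) ≤ Real.exp (-β * T) / β := by
  have hβ' : -β < 0 := neg_neg_of_pos hβ
  calc ∫ t in Ioi T, (heatK G d t x y - 1 / Nat.card V)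
      ≤ ∫ t in Ioi T, Real.exp (-β * t) :=
        setIntegral_mono_on
          ((integrableOn_heatK_sub hG hreg hd hgap hβ x y).mono_set (Ioi_subset_Ioi hT))
          (integrableOn_exp_mul_Ioi hβ' T) measurableSet_Ioi fun t ht =>
            (le_abs_self _).trans
              (abs_heatK_sub_le hG hreg hd hgap (hT.trans (le_of_lt ht)) x y)
    _ = Real.exp (-β * T) / β := by rw [integral_exp_mul_Ioi hβ', neg_div_neg_eq]

end LongTime

section ZeroAverageGreen

theorem exp_one_mul_log_div_le_logb {b x : ℝ} (hb : 1 < b) (hx : 1 ≤ x) :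
    Real.exp 1 * (Real.log x / b) ≤ Real.logb b x := by
  have hlog : Real.exp 1 * Real.log b ≤ b := by
    simpa [Real.exp_log (zero_lt_one.trans hb)] using Real.exp_one_mul_le_exp (x := Real.log b)
  have hx' : 0 ≤ Real.log x := Real.log_nonneg hx
  rw [Real.logb, ← mul_div_assoc, div_le_div_iff₀ (zero_lt_one.trans hb) (Real.log_pos hb)]
  calc Real.exp 1 * Real.log x * Real.log b = Real.log x * (Real.exp 1 * Real.log b) := by ring
    _ ≤ Real.log x * b := by gcongr

variable {V : Type*} [Fintype V] {G : SimpleGraph V} {d : ℕ} {β : ℝ}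

theorem zGreen_le (hG : G.Connected) (hd : 3 ≤ d) (hreg : IsReg G d) (hgap : SpectralGapLB G d β)
    (hβ : 0 < β) (x y : V) {R : ℕ} (hcyc : adjPairs G (gball G x R) ≤ 2 * (gball G x R).ncard)
    {T : ℝ} (hT : 0 ≤ T) (hRT : Real.exp 1 * T ≤ R + 1) :
    zGreen G d (Nat.card V) x y ≤
      16 / 7 * treeGreen G d x y + T * Real.exp (-T) + Real.exp (-β * T) / β := by
  have hd₀ : d ≠ 0 := by lia
  have hint := integrableOn_heatK_sub hG hreg hd₀ hgap hβ x y
  have hheat : IntegrableOn (fun t => heatK G d t x y) (Ioc 0 T) :=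
    (continuous_heatK G d x y).integrableOn_Ioc
  have hshort : ∫ t in Ioc 0 T, (heatK G d t x y - 1 / Nat.card V) ≤
      16 / 7 * treeGreen G d x y + T * Real.exp (-T) := by
    calc ∫ t in Ioc 0 T, (heatK G d t x y - 1 / Nat.card V)
        ≤ ∫ t in Ioc 0 T, heatK G d t x y :=
          setIntegral_mono_on (hint.mono_set Ioc_subset_Ioi_self) hheat measurableSet_Ioc
            fun _ _ => sub_le_self _ (by positivity)
      _ ≤ expectedVisits G d (R + 1) x y + T * Real.exp (-T) :=
          setIntegral_Ioc_heatK_le hreg hd₀ x y hT (by exact_mod_cast hRT) hheat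
      _ ≤ 16 / 7 * treeGreen G d x y + T * Real.exp (-T) := by
          gcongr
          exact expectedVisits_le_treeGreen hG hd hreg x y hcyc
  rw [zGreen, ← Ioc_union_Ioi_eq_Ioi hT, setIntegral_union (Ioc_disjoint_Ioi le_rfl)
    measurableSet_Ioi (hint.mono_set Ioc_subset_Ioi_self) (hint.mono_set (Ioi_subset_Ioi hT))]
  exact add_le_add hshort (setIntegral_Ioi_heatK_sub_le hG hreg hd₀ hgap hβ x y hT)

end ZeroAverageGreen

end GFF

open GFF in
theorem green_function_upper_bound_general {V : Type*} [Fintype V] {G : SimpleGraph V} {d : ℕ}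
    {α β : ℝ} (hα : 0 ≤ α) (hβ : 0 < β) (hd : 3 ≤ d) (hG : G.Connected) (hreg : IsReg G d)
    (hgap : SpectralGapLB G d β) (x y : V)
    (hcyc : adjPairs G (gball G x ⌊α * Real.logb ((d : ℝ) - 1) (Nat.card V)⌋₊) ≤
      2 * (gball G x ⌊α * Real.logb ((d : ℝ) - 1) (Nat.card V)⌋₊).ncard) :
    zGreen G d (Nat.card V) x y ≤
      16 / 7 * treeGreen G d x y
        + α / (d - 1) * Real.log (Nat.card V) * (Nat.card V : ℝ) ^ (-(c0 d α β) / β)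
        + 1 / (β * (Nat.card V : ℝ) ^ c0 d α β) := by
  have : Nonempty V := ⟨x⟩
  have hd' : (3 : ℝ) ≤ d := by exact_mod_cast hd
  have hN : (0 : ℝ) < Nat.card V := by exact_mod_cast Nat.card_pos
  have hd₁ : (0 : ℝ) < d - 1 := by linarith
  set T : ℝ := α * (Real.log (Nat.card V) / (d - 1)) with hT
  have hT₀ : 0 ≤ T := mul_nonneg hα (div_nonneg (Real.log_natCast_nonneg _) hd₁.le)
  have hRT : Real.exp 1 * T ≤ ⌊α * Real.logb ((d : ℝ) - 1) (Nat.card V)⌋₊ + 1 := by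
    refine le_trans ?_ (Nat.lt_floor_add_one _).le
    rw [hT, mul_left_comm]
    gcongr
    exact exp_one_mul_log_div_le_logb (by linarith) (by exact_mod_cast Nat.card_pos)
  have hpow_neg : (Nat.card V : ℝ) ^ (-(c0 d α β) / β) = Real.exp (-T) := by
    rw [Real.rpow_def_of_pos hN, hT, c0]
    congr 1
    field_simp
  have hpow : (Nat.card V : ℝ) ^ c0 d α β = Real.exp (β * T) := by
    rw [Real.rpow_def_of_pos hN, hT, c0]
    congr 1
    ring
  convert zGreen_le hG hd hreg hgap hβ x y hcyc hT₀ hRT using 2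
  · rw [hpow_neg, hT]
    ring
  · rw [hpow, neg_mul, Real.exp_neg]
    field_simp

/-- upper bound on the zero-average Green function. -/
theorem green_function_upper_bound
    (d : ℕ) (hd : 3 ≤ d)
    (V : ℕ → Type) [∀ n, Fintype (V n)]
    (G : ∀ n, SimpleGraph (V n)) (N : ℕ → ℕ) (α β : ℝ)
    (hα : 0 < α ∧ α ≤ 1) (hβ : 0 < β ∧ β ≤ 2)
    (hNmono : StrictMono N) (hNpos : ∀ n, 1 ≤ N n)
    (hcard : ∀ n, Nat.card (V n) = N n)
    (hconn : ∀ n, (G n).Connected)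
    (hreg : ∀ n, GFF.IsReg (G n) d)
    (hcyc : ∀ n (x : V n),
      GFF.adjPairs (G n) (GFF.gball (G n) x ⌊α * Real.logb ((d : ℝ) - 1) (N n : ℝ)⌋₊) ≤
        2 * (GFF.gball (G n) x ⌊α * Real.logb ((d : ℝ) - 1) (N n : ℝ)⌋₊).ncard)
    (hgap : ∀ n, GFF.SpectralGapLB (G n) d β) :
    ∀ (n : ℕ) (x y : V n),
      GFF.zGreen (G n) d (N n) x y ≤
        16 / 7 * (((d : ℝ) - 1) / ((d : ℝ) - 2)) * (((d : ℝ) - 1)⁻¹) ^ ((G n).dist x y)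
          + 2 * Real.log (N n) * (N n : ℝ) ^ (-(GFF.c0 d α β) / β)
          + 1 / (β * (N n : ℝ) ^ (GFF.c0 d α β)) := by
  intro n x y
  have h := green_function_upper_bound_general hα.1.le hβ.1 hd (hconn n) (hreg n) (hgap n) x y
    (by rw [hcard n]; exact hcyc n x)
  have hd' : (3 : ℝ) ≤ d := by exact_mod_cast hd
  have hcoeff : α / (d - 1) ≤ 2 := by
    rw [div_le_iff₀ (by linarith)]
    linarith [hα.2]
  rw [hcard n, GFF.treeGreen, ← mul_assoc] at h
  exact h.trans (by gcongr)
end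

section
/- Let x be a vertex of G_n and R ≥ 0 be such that the ball B_{G_n}(x,R) contains a unique cycle, of length ℓ, and let y ∈ B_{G_n}(x,R). Then: (i) no z ∈ π_{n,x}^{-1}({y}) ∩ B_{T_d}(o,R) satisfies d_{T_d}(o,z) < d_{G_n}(x,y); (ii) for every k ≥ 0, the set {z ∈ π_{n,x}^{-1}({y}) ∩ B_{T_d}(o,R) : d_{T_d}(o,z) ∈ [k, k+ℓ)} has at most 2 elements. Equivalently, for every k ≥ 0 there are at most 2 non-backtracking paths from x to y inside B_{G_n}(x,R) whose length lies in [k, k+ℓ). -/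
open MeasureTheory ProbabilityTheory Filter Set
open scoped ENNReal NNReal ENat Classical

/-!
Sending a tree vertex to the image of its geodesic from the root embeds the preimages of `y` into
the non-backtracking walks from `x` to `y`, so it is enough to count the latter. Let `a` be the
first vertex of the cycle on a path from `x`, and cut the cycle at an edge `ab`. What remains is a
forest, where a non-backtracking walk is determined by its endpoints. Hence a non-backtracking walk
from `x` to `y` either avoids `ab`, or winds around the cycle in the direction `a → b`, or in the
direction `b → a`, and within each class it is determined by its number of turns. Every turn costs
the length `ℓ` of the cycle, so a window of lengths of size `ℓ` contains at most one walk of each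
class. Since the cycle is entered at `a`, winding in the direction `b → a` costs at least `ℓ` more
than avoiding `ab`, so the window cannot meet both of these classes.
-/

namespace GFF

open SimpleGraph

section Nonbacktracking

variable {V W : Type*} {G : SimpleGraph V} {G' : SimpleGraph W} {x y : V}

/-- Non-backtracking walks, encoded by the absence of repeated consecutive edges: for a walk
`y₀, …, yₘ` this says `yᵢ ≠ yᵢ₋₂` for all `2 ≤ i ≤ m`. -/
def IsNonbacktracking (w : G.Walk x y) : Prop := w.edges.IsChain (· ≠ ·)

/-- Non-backtracking walks which do not use the edge `e`: the ones that survive when the cycle is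
cut at `e`. -/
def IsNonbacktrackingOff (e : Sym2 V) (w : G.Walk x y) : Prop :=
  IsNonbacktracking w ∧ e ∉ w.edges

lemma isNonbacktracking_of_isPath {w : G.Walk x y} (hw : w.IsPath) : IsNonbacktracking w :=
  hw.isTrail.edges_nodup.isChain

lemma IsNonbacktracking.of_map {f : G →g G'} {w : G.Walk x y}
    (hw : IsNonbacktracking (w.map f)) : IsNonbacktracking w := by
  rw [IsNonbacktracking, Walk.edges_map] at hw
  exact List.isChain_of_isChain_map (Sym2.map f) (fun _ _ h he ↦ h (congrArg _ he)) hw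

lemma IsNonbacktracking.map {f : G →g G'} (hf : ∀ v, InjOn f (G.neighborSet v))
    {w : G.Walk x y} (hw : IsNonbacktracking w) : IsNonbacktracking (w.map f) := by
  induction w with
  | nil => exact List.isChain_nil
  | @cons u v _ huv w ih =>
    have ih := ih hw.tail
    cases w with
    | nil => exact List.isChain_singleton _
    | @cons _ v' _ hvv' w =>
      simp only [IsNonbacktracking, Walk.edges_cons, Walk.map_cons, List.isChain_cons_cons]
        at hw ih ⊢
      refine ⟨fun he ↦ hw.1 ?_, ih⟩
      have huv' : f u = f v' := by
        rw [Sym2.eq_swap] at he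
        exact Sym2.congr_right.1 he
      rw [hf v huv.symm hvv' huv', Sym2.eq_swap]

end Nonbacktracking

section UniqueLifting

variable {V T : Type*} {G : SimpleGraph V} {H : SimpleGraph T}

lemma end_eq_of_support_map_eq {f : H →g G} (hf : ∀ t, InjOn f (H.neighborSet t)) {o z z' : T}
    (p : H.Walk o z) (p' : H.Walk o z') (h : (p.map f).support = (p'.map f).support) :
    z = z' := by
  induction p with
  | nil =>
    cases p' with
    | nil => rfl
    | cons _ q => simp at h
  | @cons u v _ huv p ih =>
    cases p' with
    | nil => simp at h
    | @cons _ v' _ huv' q =>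
      have htail : (p.map f).support = (q.map f).support := by simpa using h
      have hhead : f v = f v' := by
        simpa [List.head?_eq_some_head] using congrArg List.head? htail
      obtain rfl := hf u huv huv' hhead
      exact ih q htail

end UniqueLifting

section CutEdge

variable {V : Type*} {G : SimpleGraph V} {a b x y : V}

lemma IsNonbacktrackingOff.cons {e : Sym2 V} {u : V} {h : G.Adj x u} {w : G.Walk u y}
    (he : e ≠ s(x, u)) (hw : IsNonbacktrackingOff e w) (hc : IsNonbacktracking (Walk.cons h w)) :
    IsNonbacktrackingOff e (Walk.cons h w) :=
  ⟨hc, by simpa [he] using hw.2⟩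

lemma IsNonbacktrackingOff.reverse {e : Sym2 V} {w : G.Walk x y} (hw : IsNonbacktrackingOff e w) :
    IsNonbacktrackingOff e w.reverse := by
  refine ⟨?_, by simpa using hw.2⟩
  rw [IsNonbacktracking, Walk.edges_reverse, List.isChain_reverse]
  exact hw.1.imp fun _ _ ↦ Ne.symm

lemma IsNonbacktrackingOff.eq_of_isAcyclic {e : Sym2 V} (hF : (G.deleteEdges {e}).IsAcyclic)
    {p q : G.Walk x y} (hp : IsNonbacktrackingOff e p) (hq : IsNonbacktrackingOff e q) :
    p = q := by
  have isPath_toDeleteEdge {w : G.Walk x y} (hw : IsNonbacktrackingOff e w) :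
      (w.toDeleteEdge e hw.2).IsPath := by
    rw [hF.isPath_iff_isChain, Walk.edges_transfer]
    exact hw.1
  have huniq : p.toDeleteEdge e hp.2 = q.toDeleteEdge e hq.2 := congrArg Subtype.val <|
    (hF.subsingleton_path x y).elim ⟨_, isPath_toDeleteEdge hp⟩ ⟨_, isPath_toDeleteEdge hq⟩
  simpa only [Walk.map_toDeleteEdges_eq] using
    congrArg (Walk.map (.ofLE (G.deleteEdges_le {e}))) huniq

lemma IsNonbacktrackingOff.length_le_of_isAcyclic {e : Sym2 V}
    (hF : (G.deleteEdges {e}).IsAcyclic) {p q : G.Walk x y} (hp : IsNonbacktrackingOff e p)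
    (hq : e ∉ q.edges) : p.length ≤ q.length := by
  have hbypass : IsNonbacktrackingOff e q.bypass :=
    ⟨isNonbacktracking_of_isPath q.bypass_isPath, fun h ↦ hq (q.edges_bypass_subset_edges h)⟩
  rw [hp.eq_of_isAcyclic hF hbypass]
  exact q.length_bypass_le_length

/-- The walk that crosses `a → b`, goes round the closed walk `q · (a → b)` a further `m` times,
and then follows `r`. -/
def windingWalk (hab : G.Adj a b) (q : G.Walk b a) (r : G.Walk b y) : ℕ → G.Walk a y
  | 0 => .cons hab r
  | m + 1 => .cons hab (q.append (windingWalk hab q r m))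

lemma length_windingWalk (hab : G.Adj a b) (q : G.Walk b a) (r : G.Walk b y) (m : ℕ) :
    (windingWalk hab q r m).length = r.length + 1 + m * (q.length + 1) := by
  induction m with
  | zero => simp [windingWalk]
  | succ m ih =>
    simp only [windingWalk, Walk.length_cons, Walk.length_append, ih]
    ring

/-- The shape of the walks whose first crossing of the cut edge is `a → b`: `w` reaches `a` without
using `ab`, winds around the cycle `(a → b) · q`, and then leaves without using `ab` again. -/
def WindsAround (hab : G.Adj a b) (q : G.Walk b a) (w : G.Walk x y) : Prop :=
  ∃ (p : G.Walk x a) (r : G.Walk b y) (m : ℕ), IsNonbacktrackingOff s(a, b) p ∧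
    IsNonbacktrackingOff s(a, b) r ∧ w = p.append (windingWalk hab q r m)

lemma WindsAround.cons {hab : G.Adj a b} {q : G.Walk b a} {u : V} {h : G.Adj x u} {w : G.Walk u y}
    (he : s(a, b) ≠ s(x, u)) (hw : WindsAround hab q w) (hc : IsNonbacktracking (Walk.cons h w)) :
    WindsAround hab q (Walk.cons h w) := by
  obtain ⟨p, r, m, hp, hr, rfl⟩ := hw
  refine ⟨.cons h p, r, m, hp.cons he ?_, hr, rfl⟩
  rw [IsNonbacktracking, ← Walk.cons_append, Walk.edges_append] at hc
  exact hc.left_of_append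

lemma windsAround_cons (hF : (G.deleteEdges {s(a, b)}).IsAcyclic) (hab : G.Adj a b)
    {q : G.Walk b a} (hq : IsNonbacktrackingOff s(a, b) q) {w : G.Walk b y}
    (hc : IsNonbacktracking (Walk.cons hab w))
    (hw : IsNonbacktrackingOff s(a, b) w ∨ WindsAround hab q w ∨
      WindsAround hab.symm q.reverse w) :
    WindsAround hab q (Walk.cons hab w) := by
  have nil_off (u : V) : IsNonbacktrackingOff s(a, b) (Walk.nil : G.Walk u u) :=
    ⟨List.isChain_nil, List.not_mem_nil⟩
  rcases hw with hw | ⟨p, r, m, hp, hr, rfl⟩ | ⟨p, r, m, hp, -, rfl⟩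
  · exact ⟨.nil, w, 0, nil_off a, hw, rfl⟩
  · obtain rfl := hp.eq_of_isAcyclic hF hq
    exact ⟨.nil, r, m + 1, nil_off a, hr, rfl⟩
  · rw [Sym2.eq_swap] at hp
    obtain rfl := hp.eq_of_isAcyclic hF (nil_off b)
    cases m <;> simp [IsNonbacktracking, windingWalk, Sym2.eq_swap] at hc

theorem IsNonbacktracking.off_or_windsAround (hF : (G.deleteEdges {s(a, b)}).IsAcyclic)
    (hab : G.Adj a b) {q : G.Walk b a} (hq : IsNonbacktrackingOff s(a, b) q) {w : G.Walk x y}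
    (hw : IsNonbacktracking w) :
    IsNonbacktrackingOff s(a, b) w ∨ WindsAround hab q w ∨ WindsAround hab.symm q.reverse w := by
  induction w with
  | nil => exact .inl ⟨hw, List.not_mem_nil⟩
  | @cons x u y h w ih =>
    have ih := ih hw.tail
    by_cases he : s(a, b) = s(x, u)
    · rcases Sym2.eq_iff.1 he with ⟨rfl, rfl⟩ | ⟨rfl, rfl⟩
      · exact .inr (.inl (windsAround_cons hF hab hq hw ih))
      · refine .inr (.inr (windsAround_cons (by rwa [Sym2.eq_swap]) hab.symm ?_ hw ?_))
        · simpa only [Sym2.eq_swap] using hq.reverse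
        · rw [Walk.reverse_reverse, Sym2.eq_swap]
          exact ih.imp_right Or.symm
    · have he' : s(b, a) ≠ s(x, u) := by rwa [Sym2.eq_swap]
      exact ih.imp (·.cons he hw) (Or.imp (·.cons he hw) (·.cons he' hw))

lemma WindsAround.eq_of_length_mem_Ico (hF : (G.deleteEdges {s(a, b)}).IsAcyclic)
    {hab : G.Adj a b} {q : G.Walk b a} {w w' : G.Walk x y} (hw : WindsAround hab q w)
    (hw' : WindsAround hab q w') {k : ℕ} (hk : w.length ∈ Ico k (k + (q.length + 1)))
    (hk' : w'.length ∈ Ico k (k + (q.length + 1))) : w = w' := by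
  obtain ⟨p, r, m, hp, hr, rfl⟩ := hw
  obtain ⟨p', r', m', hp', hr', rfl⟩ := hw'
  obtain rfl := hp.eq_of_isAcyclic hF hp'
  obtain rfl := hr.eq_of_isAcyclic hF hr'
  simp only [Walk.length_append, length_windingWalk, Set.mem_Ico] at hk hk'
  have le_of_lengths {i j : ℕ} (h : p.length + (r.length + 1 + i * (q.length + 1)) <
      p.length + (r.length + 1 + j * (q.length + 1)) + (q.length + 1)) : i ≤ j := by
    refine Nat.lt_succ_iff.1 (lt_of_mul_lt_mul_right (a := q.length + 1) ?_ (Nat.zero_le _))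
    rw [Nat.succ_mul]
    omega
  rw [le_antisymm (le_of_lengths (i := m) (j := m') (by omega)) (le_of_lengths (by omega))]

/- With `p.append q.reverse` as the forest path from `x` to `b`, winding in the direction `b → a`
goes round the whole cycle on top of a walk from `x` to `y` that avoids `ab`. -/
lemma WindsAround.length_add_le (hF : (G.deleteEdges {s(a, b)}).IsAcyclic) {hba : G.Adj b a}
    {q : G.Walk b a} {p : G.Walk x a} (hpq : IsNonbacktrackingOff s(a, b) (p.append q.reverse))
    {w w' : G.Walk x y} (hw : WindsAround hba q.reverse w)
    (hw' : IsNonbacktrackingOff s(a, b) w') : w'.length + (q.length + 1) ≤ w.length := by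
  obtain ⟨p', r, m, hp', hr, rfl⟩ := hw
  rw [Sym2.eq_swap] at hp' hr
  obtain rfl := hp'.eq_of_isAcyclic hF hpq
  have hpr : s(a, b) ∉ (p.append r).edges := by
    have hp := hpq.2
    rw [Walk.edges_append, List.mem_append, not_or] at hp ⊢
    exact ⟨hp.1, hr.2⟩
  have hle := hw'.length_le_of_isAcyclic hF hpr
  simp only [Walk.length_append, Walk.length_reverse, length_windingWalk] at hle ⊢
  omega

lemma eq_of_off_or_windsAround_symm (hF : (G.deleteEdges {s(a, b)}).IsAcyclic) {hba : G.Adj b a}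
    {q : G.Walk b a} {p : G.Walk x a} (hpq : IsNonbacktrackingOff s(a, b) (p.append q.reverse))
    {w w' : G.Walk x y}
    (hw : IsNonbacktrackingOff s(a, b) w ∨ WindsAround hba q.reverse w)
    (hw' : IsNonbacktrackingOff s(a, b) w' ∨ WindsAround hba q.reverse w') {k : ℕ}
    (hk : w.length ∈ Ico k (k + (q.length + 1)))
    (hk' : w'.length ∈ Ico k (k + (q.length + 1))) : w = w' := by
  rcases hw with hw | hw <;> rcases hw' with hw' | hw'
  · exact hw.eq_of_isAcyclic hF hw'
  · have hle := hw'.length_add_le hF hpq hw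
    exact absurd hk'.2 (by linarith [hk.1])
  · have hle := hw.length_add_le hF hpq hw'
    exact absurd hk.2 (by linarith [hk'.1])
  · exact hw.eq_of_length_mem_Ico (by rwa [Sym2.eq_swap]) hw'
      (by rwa [Walk.length_reverse]) (by rwa [Walk.length_reverse])

end CutEdge

section Unicyclic

variable {V : Type*} {G : SimpleGraph V} {a b x y : V}

lemma isPath_append {p : G.Walk x a} {q : G.Walk a b} (hp : p.IsPath) (hq : q.IsPath)
    (h : ∀ u ∈ p.support, u ∈ q.support → u = a) : (p.append q).IsPath := by
  have hq' := hq.support_nodup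
  rw [← Walk.cons_tail_support, List.nodup_cons] at hq'
  rw [Walk.isPath_def, Walk.support_append, List.nodup_append']
  refine ⟨hp.support_nodup, hq'.2, fun u hup huq ↦ hq'.1 ?_⟩
  exact h u hup (List.mem_of_mem_tail huq) ▸ huq

lemma exists_isPath_forall_mem_support_eq {v : V} (hx : G.Reachable x v) (c : G.Walk v v) :
    ∃ a ∈ c.support, ∃ p : G.Walk x a, p.IsPath ∧ ∀ u ∈ p.support, u ∈ c.support → u = a := by
  obtain ⟨p, hp⟩ := hx.exists_isPath
  obtain ⟨a, hac, hap, ha⟩ := p.exists_mem_support_forall_mem_support_imp_eq c.support.toFinset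
    ⟨v, by simp⟩
  exact ⟨a, List.mem_toFinset.1 hac, p.takeUntil a hap, hp.takeUntil hap,
    fun u hu huc ↦ ha u (List.mem_toFinset.2 huc) hu⟩

lemma isNonbacktrackingOff_append_reverse {hab : G.Adj a b} {q : G.Walk b a}
    (hc : (Walk.cons hab q).IsCycle) {p : G.Walk x a} (hp : p.IsPath)
    (hpq : ∀ u ∈ p.support, u ∈ q.support → u = a) :
    IsNonbacktrackingOff s(a, b) (p.append q.reverse) := by
  rw [Walk.cons_isCycle_iff] at hc
  refine ⟨isNonbacktracking_of_isPath (isPath_append hp hc.1.reverse (by simpa using hpq)), ?_⟩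
  rw [Walk.edges_append, Walk.edges_reverse, List.mem_append, List.mem_reverse, not_or]
  exact ⟨fun h ↦ hab.ne' (hpq b (p.snd_mem_support_of_mem_edges h) q.start_mem_support), hc.2⟩

lemma encard_le_two_of_isAcyclic_deleteEdges (hF : (G.deleteEdges {s(a, b)}).IsAcyclic)
    {hab : G.Adj a b} {q : G.Walk b a} (hc : (Walk.cons hab q).IsCycle) {p : G.Walk x a}
    (hp : p.IsPath) (hpq : ∀ u ∈ p.support, u ∈ q.support → u = a) (k : ℕ) :
    {w : G.Walk x y | IsNonbacktracking w ∧
      w.length ∈ Ico k (k + (Walk.cons hab q).length)}.encard ≤ 2 := by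
  have hstem := isNonbacktrackingOff_append_reverse hc hp hpq
  have hq : IsNonbacktrackingOff s(a, b) q := by
    rw [Walk.cons_isCycle_iff] at hc
    exact ⟨isNonbacktracking_of_isPath hc.1, hc.2⟩
  let forward : Set (G.Walk x y) :=
    {w | WindsAround hab q w ∧ w.length ∈ Ico k (k + (q.length + 1))}
  let other : Set (G.Walk x y) :=
    {w | (IsNonbacktrackingOff s(a, b) w ∨ WindsAround hab.symm q.reverse w) ∧
      w.length ∈ Ico k (k + (q.length + 1))}
  have hforward : forward.Subsingleton := fun w hw w' hw' ↦
    hw.1.eq_of_length_mem_Ico hF hw'.1 hw.2 hw'.2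
  have hother : other.Subsingleton := fun w hw w' hw' ↦
    eq_of_off_or_windsAround_symm hF hstem hw.1 hw'.1 hw.2 hw'.2
  have hsub : {w : G.Walk x y | IsNonbacktracking w ∧
      w.length ∈ Ico k (k + (Walk.cons hab q).length)} ⊆ forward ∪ other := by
    rintro w ⟨hw, hk⟩
    rcases hw.off_or_windsAround hF hab hq with h | h | h
    · exact .inr ⟨.inl h, hk⟩
    · exact .inl ⟨h, hk⟩
    · exact .inr ⟨.inr h, hk⟩
  calc _ ≤ (forward ∪ other).encard := Set.encard_le_encard hsub
    _ ≤ forward.encard + other.encard := Set.encard_union_le _ _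
    _ ≤ 1 + 1 := add_le_add (Set.encard_le_one_iff_subsingleton.2 hforward)
        (Set.encard_le_one_iff_subsingleton.2 hother)
    _ = 2 := one_add_one_eq_two

lemma isAcyclic_deleteEdges_of_forall_isCycle {e : Sym2 V}
    (h : ∀ (v : V) (c : G.Walk v v), c.IsCycle → e ∈ c.edges) :
    (G.deleteEdges {e}).IsAcyclic := by
  intro v c hc
  have he := h v _ (hc.mapLe (G.deleteEdges_le {e}))
  rw [Walk.edges_mapLe_eq_edges] at he
  simpa using c.edges_subset_edgeSet he

theorem encard_nonbacktracking_walk_le_two {v : V} {c : G.Walk v v} (hc : c.IsCycle)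
    (huniq : ∀ (v' : V) (c' : G.Walk v' v'), c'.IsCycle → c.edges ⊆ c'.edges)
    (hx : G.Reachable x v) (k : ℕ) :
    {w : G.Walk x y | IsNonbacktracking w ∧ w.length ∈ Ico k (k + c.length)}.encard ≤ 2 := by
  obtain ⟨a, hac, p, hp, hpc⟩ := exists_isPath_forall_mem_support_eq hx c
  have hrot : (c.rotate a hac).IsCycle := (Walk.isCycle_rotate hac).2 hc
  have hedges := (c.rotate_edges a hac).perm.subset
  have hsupp (u : V) : u ∈ (c.rotate a hac).support → u ∈ c.support :=
    (c.mem_support_rotate_iff a hac).1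
  rw [← c.length_rotate a hac]
  cases hr : c.rotate a hac with
  | nil => exact absurd hrot (by simp [hr])
  | cons hab q =>
    rw [hr] at hrot hedges hsupp
    refine encard_le_two_of_isAcyclic_deleteEdges
      (isAcyclic_deleteEdges_of_forall_isCycle fun v' c' hc' ↦ ?_) hrot hp
      (fun u hup huq ↦ hpc u hup (hsupp u (by simp [huq]))) k
    exact huniq v' c' hc' (hedges (by simp))

end Unicyclic

section Ball

variable {V : Type*} {G : SimpleGraph V} {x y : V} {R : ℕ}

lemma mem_gball_of_mem_support {w : G.Walk x y} (hw : w.length ≤ R) {u : V} (hu : u ∈ w.support) :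
    u ∈ gball G x R :=
  (dist_le (w.takeUntil u hu)).trans ((w.length_takeUntil_le_length hu).trans hw)

lemma center_mem_gball : x ∈ gball G x R := by
  simp [gball]

lemma reachable_induce_gball (hG : G.Connected) (hy : y ∈ gball G x R) :
    (G.induce (gball G x R)).Reachable ⟨x, center_mem_gball⟩ ⟨y, hy⟩ := by
  obtain ⟨w, hw⟩ := hG.exists_walk_length_eq_dist x y
  exact ⟨w.induce _ fun u ↦ mem_gball_of_mem_support (hw.trans_le hy)⟩

theorem encard_nonbacktracking_walk_in_gball_le_two (hG : G.Connected) {v : V} {c : G.Walk v v}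
    (hc : c.IsCycle) (hcR : ∀ u ∈ c.support, u ∈ gball G x R)
    (huniq : ∀ (v' : V) (c' : G.Walk v' v'), c'.IsCycle →
      (∀ u ∈ c'.support, u ∈ gball G x R) → c.edges ⊆ c'.edges)
    (hy : y ∈ gball G x R) (k : ℕ) :
    {w : G.Walk x y | (∀ u ∈ w.support, u ∈ gball G x R) ∧ IsNonbacktracking w ∧
      w.length ∈ Ico k (k + c.length)}.encard ≤ 2 := by
  let ι := (Embedding.induce (G := G) (gball G x R)).toHom
  have hι : Function.Injective ι := Subtype.val_injective
  let c₀ := c.induce _ hcR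
  have hmap : c₀.map ι = c := c.map_induce hcR
  have hlen : c₀.length = c.length := (c₀.length_map ι).symm.trans (congrArg Walk.length hmap)
  have hedges : c₀.edges.map (Sym2.map ι) = c.edges :=
    (c₀.edges_map ι).symm.trans (congrArg Walk.edges hmap)
  have hc₀ : c₀.IsCycle := .of_map (f := ι) (hmap.symm ▸ hc)
  have huniq₀ : ∀ (v' : gball G x R) (c' : (G.induce (gball G x R)).Walk v' v'),
      c'.IsCycle → c₀.edges ⊆ c'.edges := by
    intro v' c' hc'
    have hsub := huniq _ (c'.map ι) ((Walk.isCycle_map_iff_of_injective hι).2 hc') (by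
      simp only [Walk.support_map, List.mem_map]
      rintro _ ⟨u, -, rfl⟩
      exact u.2)
    rwa [← hedges, Walk.edges_map, List.map_subset_iff _ (Sym2.map.injective hι)] at hsub
  have hle := encard_nonbacktracking_walk_le_two (y := ⟨y, hy⟩) hc₀ huniq₀
    (reachable_induce_gball hG (hcR v c.start_mem_support)) k
  refine (Set.encard_le_encard ?_).trans ((Set.encard_image_le (Walk.map ι) _).trans hle)
  rintro w ⟨hwR, hw, hk⟩
  have hmapw : (w.induce _ hwR).map ι = w := w.map_induce hwR
  refine ⟨w.induce _ hwR, ⟨.of_map (f := ι) (hmapw.symm ▸ hw), ?_⟩, hmapw⟩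
  rwa [hlen, ← (w.induce _ hwR).length_map ι, congrArg Walk.length hmapw]

end Ball

section Cover

variable {V T : Type*} {Gt : SimpleGraph T} {G : SimpleGraph V}

lemma dist_map_le (f : Gt →g G) {s t : T} (hst : Gt.Reachable s t) :
    G.dist (f s) (f t) ≤ Gt.dist s t := by
  obtain ⟨p, hp⟩ := hst.exists_walk_length_eq_dist
  simpa [hp] using dist_le (p.map f)

theorem encard_preimage_le_encard_nonbacktracking_walk (hT : Gt.Connected) {f : Gt →g G}
    (hf : ∀ t, InjOn f (Gt.neighborSet t)) (o : T) (R : ℕ) (I : Set ℕ) (y : V) :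
    {z : T | f z = y ∧ z ∈ gball Gt o R ∧ Gt.dist o z ∈ I}.encard ≤
      {w : G.Walk (f o) y | (∀ u ∈ w.support, u ∈ gball G (f o) R) ∧ IsNonbacktracking w ∧
        w.length ∈ I}.encard := by
  choose p hp hlen using hT.exists_path_of_dist o
  let g (z : T) : Σ y, G.Walk (f o) y := ⟨f z, (p z).map f⟩
  have hg : Function.Injective g := fun z z' h ↦
    end_eq_of_support_map_eq hf (p z) (p z') (congrArg (fun w ↦ w.2.support) h)
  rw [← hg.encard_image]
  refine (Set.encard_le_encard ?_).trans (Set.encard_image_le (Sigma.mk y) _)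
  rintro _ ⟨z, ⟨rfl, hzR, hzI⟩, rfl⟩
  have hlenf : ((p z).map f).length = Gt.dist o z := by rw [Walk.length_map, hlen]
  exact ⟨(p z).map f, ⟨fun u ↦ mem_gball_of_mem_support (hlenf.trans_le hzR),
    (isNonbacktracking_of_isPath (hp z)).map hf, hlenf ▸ hzI⟩, rfl⟩

end Cover

namespace IsCoverMap

variable {V T : Type*} {Gt : SimpleGraph T} {G : SimpleGraph V} {o : T} {x : V} {π : T → V}

/-- A cover tree as a graph homomorphism, along which walks of the tree are mapped. -/
def toHom (hπ : IsCoverMap Gt G o x π) : Gt →g G where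
  toFun := π
  map_rel' {s t} hst := by
    have hmem : π t ∈ π '' Gt.neighborSet s := ⟨t, hst, rfl⟩
    rwa [hπ.2.2 s] at hmem

lemma injOn_neighborSet (hπ : IsCoverMap Gt G o x π) {d : ℕ} (hd : d ≠ 0) (hGt : IsReg Gt d)
    (hG : IsReg G d) (t : T) : InjOn π (Gt.neighborSet t) := by
  have hcard : (Gt.neighborSet t).ncard = d := hGt t
  refine Set.injOn_of_ncard_image_eq ?_ (Set.finite_of_ncard_ne_zero (hcard ▸ hd))
  rw [hπ.2.2 t, hcard]
  exact hG (π t)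

end IsCoverMap

end GFF

theorem cover_tree_preimage_count_general {V T : Type*} {G : SimpleGraph V} (hG : G.Connected)
    {Gt : SimpleGraph T} (hT : Gt.Connected) {f : Gt →g G}
    (hf : ∀ t, InjOn f (Gt.neighborSet t)) {o : T} {R ℓ : ℕ}
    (hcyc : ∃ (v : V) (c : G.Walk v v), c.IsCycle ∧
      (∀ u ∈ c.support, u ∈ GFF.gball G (f o) R) ∧ c.length = ℓ ∧
      ∀ (v' : V) (c' : G.Walk v' v'), c'.IsCycle →
        (∀ u ∈ c'.support, u ∈ GFF.gball G (f o) R) → ∀ e, e ∈ c'.edges ↔ e ∈ c.edges)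
    {y : V} (hy : y ∈ GFF.gball G (f o) R) :
    (∀ z : T, f z = y → G.dist (f o) y ≤ Gt.dist o z) ∧
    (∀ k : ℕ,
      {z : T | f z = y ∧ z ∈ GFF.gball Gt o R ∧
          k ≤ Gt.dist o z ∧ Gt.dist o z < k + ℓ}.encard ≤ 2) := by
  obtain ⟨v, c, hc, hcR, rfl, huniq⟩ := hcyc
  refine ⟨fun z hz ↦ hz ▸ GFF.dist_map_le f (hT o z), fun k ↦ ?_⟩
  have hwalks := GFF.encard_nonbacktracking_walk_in_gball_le_two hG hc hcR
    (fun v' c' hc' hcR' e ↦ (huniq v' c' hc' hcR' e).2) hy k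
  exact (GFF.encard_preimage_le_encard_nonbacktracking_walk hT hf o R _ y).trans hwalks

/-- counting preimages under the cover tree of a ball with a unique cycle. -/
theorem cover_tree_preimage_count
    (d : ℕ) (hd : 3 ≤ d)
    (V : Type) [Fintype V]
    (G : SimpleGraph V) (hconn : G.Connected) (hreg : GFF.IsReg G d)
    (T : Type) (Gt : SimpleGraph T) (o : T) (htree : GFF.IsRegTree Gt d)
    (x : V) (π : T → V) (hπ : GFF.IsCoverMap Gt G o x π)
    (R ℓ : ℕ)
    (hcyc : ∃ (v : V) (c : G.Walk v v), c.IsCycle ∧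
      (∀ u ∈ c.support, u ∈ GFF.gball G x R) ∧ c.length = ℓ ∧
      ∀ (v' : V) (c' : G.Walk v' v'), c'.IsCycle →
        (∀ u ∈ c'.support, u ∈ GFF.gball G x R) → ∀ e, e ∈ c'.edges ↔ e ∈ c.edges)
    (y : V) (hy : y ∈ GFF.gball G x R) :
    (∀ z : T, π z = y → z ∈ GFF.gball Gt o R → G.dist x y ≤ Gt.dist o z) ∧
    (∀ k : ℕ,
      {z : T | π z = y ∧ z ∈ GFF.gball Gt o R ∧
          k ≤ Gt.dist o z ∧ Gt.dist o z < k + ℓ}.ncard ≤ 2) := by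
  obtain rfl := hπ.1
  have hinj := hπ.injOn_neighborSet (by omega) htree.2.2 hreg
  exact (cover_tree_preimage_count_general hconn htree.1 (f := hπ.toHom) hinj hcyc hy).imp
    (fun h z hz _ ↦ h z hz) fun h k ↦ ENat.toNat_le_of_le_natCast (h k)
end

section
/- Let R ≥ 0. For the discrete-time simple random walk (X_k)_{k≥0} on the d-regular tree T_d, for all y ∈ B_{T_d}(o,R) and all z ∈ S_{T_d}(o,R), the hitting distribution of the sphere satisfies P_y[ X_{H_{S_{T_d}(o,R)}} = z ] ≤ (1/(d−1))^{R − d_{T_d}(y,o)}, where H_U denotes the entrance time of the walk into the set U. -/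
open MeasureTheory ProbabilityTheory Filter Set
open scoped ENNReal NNReal ENat Classical

/-!
On the `d`-regular tree, one of the `d` neighbours of a vertex `x ≠ z` is closer to `z` and the
other `d - 1` are farther away. Writing `q = (d - 1)⁻¹` and `m = dist z x`, the identity
`q ^ (m - 1) + (d - 1) * q ^ (m + 1) = d * q ^ m` therefore says that `x ↦ q ^ dist z x` is harmonic
off `z`. It equals `1` at `z`, so it dominates the probability of ever visiting `z`: the walk
started at `y` visits `z` with probability at most `q ^ dist y z`. For `z` on the sphere of radius
`R` around `o`, the triangle inequality gives `dist y z ≥ R - dist y o`.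
-/

namespace GFF

section Graph

variable {V : Type*} {G : SimpleGraph V}

theorem countable_of_connected_of_countable_neighborSet (hG : G.Connected)
    (hN : ∀ v, (G.neighborSet v).Countable) : Countable V := by
  obtain ⟨o⟩ := hG.nonempty
  have countable_walk_ends (n : ℕ) : {v | ∃ p : G.Walk v o, p.length = n}.Countable := by
    induction n with
    | zero =>
      refine (countable_singleton o).mono ?_
      rintro v ⟨p, hp⟩
      exact SimpleGraph.Walk.eq_of_length_eq_zero hp
    | succ n ih =>
      refine (ih.biUnion fun u _ ↦ hN u).mono ?_
      rintro v ⟨_ | ⟨hvu, p⟩, hp⟩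
      · simp at hp
      · exact mem_biUnion ⟨p, Nat.succ_injective hp⟩ hvu.symm
  refine countable_univ_iff.mp ((countable_iUnion countable_walk_ends).mono fun v _ ↦ ?_)
  obtain ⟨p⟩ := hG v o
  exact mem_iUnion.mpr ⟨p.length, p, rfl⟩

theorem exists_adj_dist_eq_dist_add_one (hG : G.Connected) {x z : V} (hxz : x ≠ z) :
    ∃ c, G.Adj x c ∧ G.dist z x = G.dist z c + 1 := by
  obtain ⟨p, hp⟩ := hG.exists_walk_length_eq_dist x z
  obtain _ | @⟨_, c, _, hxc, p⟩ := p
  · exact absurd rfl hxz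
  · refine ⟨c, hxc, ?_⟩
    have hcz : G.dist z c ≤ p.length := SimpleGraph.dist_comm (G := G) ▸ SimpleGraph.dist_le p
    have hstep := hxc.diff_dist_adj (u := z)
    rw [SimpleGraph.Walk.length_cons, SimpleGraph.dist_comm] at hp
    omega

theorem eq_of_adj_of_dist_eq_dist_add_one (hG : G.IsAcyclic) {x z u v : V}
    (hxu : G.Adj x u) (hxv : G.Adj x v) (hu : G.dist z x = G.dist z u + 1)
    (hv : G.dist z x = G.dist z v + 1) : u = v := by
  have hzx : G.Reachable z x := .of_dist_ne_zero (by omega)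
  have exists_path {w : V} (hxw : G.Adj x w) (hw : G.dist z x = G.dist z w + 1) :
      ∃ p : G.Path x z, p.1.snd = w := by
    obtain ⟨p, hp⟩ := (hzx.trans hxw.reachable).symm.exists_walk_length_eq_dist
    refine ⟨⟨.cons hxw p, SimpleGraph.Walk.isPath_of_length_eq_dist _ ?_⟩, by simp⟩
    rw [SimpleGraph.Walk.length_cons, hp, SimpleGraph.dist_comm, ← hw, SimpleGraph.dist_comm]
  obtain ⟨p, rfl⟩ := exists_path hxu hu
  obtain ⟨q, rfl⟩ := exists_path hxv hv
  rw [(hG.subsingleton_path x z).elim p q]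

theorem sum_neighborFinset_dist {M : Type*} [AddCommMonoid M] (hG : G.IsTree) {x z : V}
    (hxz : x ≠ z) [Fintype (G.neighborSet x)] (f : ℕ → M) :
    ∑ u ∈ G.neighborFinset x, f (G.dist z u) =
      f (G.dist z x - 1) + (G.degree x - 1) • f (G.dist z x + 1) := by
  obtain ⟨c, hxc, hc⟩ := exists_adj_dist_eq_dist_add_one hG.connected hxz
  have hcx : c ∈ G.neighborFinset x := by simpa using hxc
  have farther : ∀ u ∈ (G.neighborFinset x).erase c, f (G.dist z u) = f (G.dist z x + 1) := by
    intro u hu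
    obtain ⟨huc, hxu⟩ : u ≠ c ∧ G.Adj x u := by simpa using hu
    have not_closer : G.dist z x ≠ G.dist z u + 1 := fun hu ↦
      huc (eq_of_adj_of_dist_eq_dist_add_one hG.isAcyclic hxu hxc hu hc)
    rw [(hG.dist_eq_dist_add_one_of_adj z hxu).resolve_left not_closer]
  rw [← Finset.add_sum_erase _ _ hcx, Finset.sum_congr rfl farther, Finset.sum_const,
    Finset.card_erase_of_mem hcx, SimpleGraph.card_neighborFinset_eq_degree, hc,
    Nat.add_sub_cancel]

theorem pow_dist_le_zpow_dist_sub_dist {K : Type*} [Field K] [LinearOrder K]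
    [IsStrictOrderedRing K] (hG : G.Connected) {q : K} (hq₀ : 0 < q) (hq₁ : q ≤ 1) (o y z : V) :
    q ^ G.dist y z ≤ q ^ ((G.dist o z : ℤ) - G.dist y o) := by
  have triangle := hG.dist_triangle (u := o) (v := y) (w := z)
  rw [SimpleGraph.dist_comm (u := o) (v := y)] at triangle
  rw [← zpow_natCast]
  exact zpow_le_zpow_right_of_le_one₀ hq₀ hq₁ (by omega)

end Graph

section MarkovChain

variable {V : Type*} [MeasurableSpace V]

/-- `μ` is the law of the Markov chain on `V` with transition matrix `K` started at `x`. It is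
specified through the (outer) measure of cylinders, since the `σ`-algebra of `V` is arbitrary and
cylinders need not be measurable. -/
def IsChainLaw (K : V → V → ℝ≥0∞) (x : V) (μ : Measure (ℕ → V)) : Prop :=
  ∀ (k : ℕ) (p : ℕ → V), μ (PiNat.cylinder p (k + 1)) =
    (if p 0 = x then 1 else 0) * ∏ i ∈ Finset.range k, K (p i) (p (i + 1))

theorem IsSRW.isChainLaw {G : SimpleGraph V} {d : ℕ} {W : V → Measure (ℕ → V)}
    (hW : IsSRW G d W) (x : V) : IsChainLaw (srwStep G d) x (W x) := fun k p ↦ by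
  simpa only [PiNat.cylinder, Nat.lt_succ_iff] using hW.2 x k p

theorem measure_cylinder_inter_le_tsum [Countable V] (μ : Measure (ℕ → V)) (p : ℕ → V) (n : ℕ)
    (S : Set (ℕ → V)) :
    μ (PiNat.cylinder p n ∩ S) ≤
      ∑' u, μ (PiNat.cylinder (Function.update p n u) (n + 1) ∩ S) := by
  rw [← PiNat.iUnion_cylinder_update, iUnion_inter]
  exact measure_iUnion_le _

namespace IsChainLaw

variable {K : V → V → ℝ≥0∞} {x : V} {μ : Measure (ℕ → V)} {A : Set V} {g : V → ℝ≥0∞}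

theorem measure_cylinder_update (hμ : IsChainLaw K x μ) (k : ℕ) (p : ℕ → V) (u : V) :
    μ (PiNat.cylinder (Function.update p (k + 1) u) (k + 2)) =
      μ (PiNat.cylinder p (k + 1)) * K (p k) u := by
  have update_eq {i : ℕ} (hi : i ≤ k) : Function.update p (k + 1) u i = p i :=
    Function.update_of_ne (by omega) _ _
  have prod_eq : ∏ i ∈ Finset.range k,
      K (Function.update p (k + 1) u i) (Function.update p (k + 1) u (i + 1)) =
        ∏ i ∈ Finset.range k, K (p i) (p (i + 1)) :=
    Finset.prod_congr rfl fun i hi ↦ by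
      rw [update_eq (Finset.mem_range_le hi), update_eq (Finset.mem_range.mp hi)]
  rw [hμ (k + 1), hμ k, Finset.prod_range_succ, prod_eq, update_eq k.zero_le, update_eq le_rfl,
    Function.update_self, mul_assoc]

theorem measure_cylinder_inter_exists_lt_mem_le [Countable V] (hμ : IsChainLaw K x μ)
    (hgA : ∀ v ∈ A, 1 ≤ g v) (hg : ∀ v ∉ A, ∑' u, K v u * g u ≤ g v) (n k : ℕ) (p : ℕ → V) :
    μ (PiNat.cylinder p (k + 1) ∩ {ω | ∃ i < n, ω (k + i) ∈ A}) ≤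
      μ (PiNat.cylinder p (k + 1)) * g (p k) := by
  induction n generalizing k p with
  | zero => simp
  | succ n ih =>
    by_cases hpk : p k ∈ A
    · calc
        _ ≤ μ (PiNat.cylinder p (k + 1)) := measure_mono inter_subset_left
        _ ≤ μ (PiNat.cylinder p (k + 1)) * g (p k) := le_mul_of_one_le_right' (hgA _ hpk)
    have not_yet (u : V) :
        PiNat.cylinder (Function.update p (k + 1) u) (k + 2) ∩ {ω | ∃ i < n + 1, ω (k + i) ∈ A} ⊆
          PiNat.cylinder (Function.update p (k + 1) u) (k + 2) ∩
            {ω | ∃ i < n, ω (k + 1 + i) ∈ A} := by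
      rintro ω ⟨hω, i, hi, hiA⟩
      have hωk : ω k = p k := by simpa using hω k (by omega)
      obtain _ | i := i
      · exact absurd (hωk ▸ hiA) hpk
      · exact ⟨hω, i, by omega, by rwa [add_right_comm]⟩
    calc
      _ ≤ ∑' u, μ (PiNat.cylinder (Function.update p (k + 1) u) (k + 2) ∩
            {ω | ∃ i < n + 1, ω (k + i) ∈ A}) := measure_cylinder_inter_le_tsum ..
      _ ≤ ∑' u, μ (PiNat.cylinder p (k + 1)) * (K (p k) u * g u) := by
        refine ENNReal.tsum_le_tsum fun u ↦ (measure_mono (not_yet u)).trans ((ih ..).trans_eq ?_)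
        rw [hμ.measure_cylinder_update, Function.update_self, mul_assoc]
      _ = μ (PiNat.cylinder p (k + 1)) * ∑' u, K (p k) u * g u := ENNReal.tsum_mul_left
      _ ≤ μ (PiNat.cylinder p (k + 1)) * g (p k) := by gcongr; exact hg _ hpk

theorem measure_exists_mem_le [Countable V] (hμ : IsChainLaw K x μ)
    (hgA : ∀ v ∈ A, 1 ≤ g v) (hg : ∀ v ∉ A, ∑' u, K v u * g u ≤ g v) :
    μ {ω | ∃ i, ω i ∈ A} ≤ g x := by
  have bound_before (n : ℕ) : μ {ω | ∃ i < n, ω i ∈ A} ≤ g x := by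
    calc
      _ ≤ ∑' u, μ (PiNat.cylinder (Function.update (fun _ ↦ x) 0 u) 1 ∩
            {ω | ∃ i < n, ω i ∈ A}) := by
        simpa only [PiNat.cylinder_zero, univ_inter] using
          measure_cylinder_inter_le_tsum μ (fun _ ↦ x) 0 {ω | ∃ i < n, ω i ∈ A}
      _ ≤ ∑' u, (if u = x then 1 else 0) * g u := by
        refine ENNReal.tsum_le_tsum fun u ↦ ?_
        simpa [hμ 0] using hμ.measure_cylinder_inter_exists_lt_mem_le hgA hg n 0
          (Function.update (fun _ ↦ x) 0 u)
      _ = g x := by simp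
  have mono : Monotone fun n ↦ {ω : ℕ → V | ∃ i < n, ω i ∈ A} :=
    fun _ _ hmn _ ⟨i, hi, hiA⟩ ↦ ⟨i, hi.trans_le hmn, hiA⟩
  calc
    _ ≤ μ (⋃ n, {ω | ∃ i < n, ω i ∈ A}) :=
      measure_mono <| by
        rintro ω ⟨i, hiA⟩
        exact mem_iUnion.mpr ⟨i + 1, i, i.lt_succ_self, hiA⟩
    _ = ⨆ n, μ {ω | ∃ i < n, ω i ∈ A} := mono.measure_iUnion
    _ ≤ g x := iSup_le bound_before

end IsChainLaw

end MarkovChain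

section RegularTree

variable {V : Type*} {G : SimpleGraph V} {d : ℕ}

theorem IsReg.finite_neighborSet (hG : IsReg G d) (hd : d ≠ 0) (v : V) :
    (G.neighborSet v).Finite :=
  finite_of_ncard_ne_zero (by rwa [← Nat.card_coe_set_eq, hG v])

theorem tsum_srwStep_mul (x : V) [Fintype (G.neighborSet x)] (g : V → ℝ≥0∞) :
    ∑' u, srwStep G d x u * g u = (d : ℝ≥0∞)⁻¹ * ∑ u ∈ G.neighborFinset x, g u := by
  rw [tsum_eq_sum (s := G.neighborFinset x) fun u hu ↦ by simp_all [srwStep], Finset.mul_sum]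
  exact Finset.sum_congr rfl fun u hu ↦ by simp_all [srwStep]

theorem inv_pow_add_mul_inv_pow_add_two {e : ℕ} (he : e ≠ 0) (m : ℕ) :
    (e : ℝ≥0∞)⁻¹ ^ m + e * (e : ℝ≥0∞)⁻¹ ^ (m + 2) =
      (e + 1) * (e : ℝ≥0∞)⁻¹ ^ (m + 1) := by
  have mul_inv_pow (j : ℕ) : (e : ℝ≥0∞) * (e : ℝ≥0∞)⁻¹ ^ (j + 1) = (e : ℝ≥0∞)⁻¹ ^ j := by
    rw [pow_succ', ← mul_assoc, ENNReal.mul_inv_cancel (by simpa) (by simp), one_mul]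
  rw [mul_inv_pow, ← mul_inv_pow m, add_mul, one_mul]

theorem IsRegTree.tsum_srwStep_mul_inv_pow_dist (hG : IsRegTree G d) (hd : 2 ≤ d) {x z : V}
    (hxz : x ≠ z) :
    ∑' u, srwStep G d x u * ((d : ℝ≥0∞) - 1)⁻¹ ^ G.dist z u =
      ((d : ℝ≥0∞) - 1)⁻¹ ^ G.dist z x := by
  obtain ⟨e, rfl⟩ : ∃ e, d = e + 1 := ⟨d - 1, by omega⟩
  obtain ⟨hconn, hacyc, hreg⟩ := hG
  have : Fintype (G.neighborSet x) := (hreg.finite_neighborSet (by omega) x).fintype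
  have degree_eq : G.degree x = e + 1 := by
    rw [← SimpleGraph.card_neighborSet_eq_degree, ← Nat.card_eq_fintype_card, hreg x]
  obtain ⟨m, hm⟩ : ∃ m, G.dist z x = m + 1 :=
    Nat.exists_eq_add_one.mpr (hconn.pos_dist_of_ne hxz.symm)
  have sub_one : ((e + 1 : ℕ) : ℝ≥0∞) - 1 = e := by simp
  rw [sub_one]
  calc
    _ = ((e + 1 : ℕ) : ℝ≥0∞)⁻¹ * ((e : ℝ≥0∞)⁻¹ ^ m + e * (e : ℝ≥0∞)⁻¹ ^ (m + 2)) := by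
      rw [tsum_srwStep_mul, sum_neighborFinset_dist ⟨hconn, hacyc⟩ hxz ((e : ℝ≥0∞)⁻¹ ^ ·),
        degree_eq, hm, Nat.add_sub_cancel, Nat.add_sub_cancel, nsmul_eq_mul]
    _ = ((e + 1 : ℕ) : ℝ≥0∞)⁻¹ * (e + 1 : ℕ) * (e : ℝ≥0∞)⁻¹ ^ (m + 1) := by
      rw [inv_pow_add_mul_inv_pow_add_two (by omega), ← Nat.cast_succ, mul_assoc]
    _ = (e : ℝ≥0∞)⁻¹ ^ G.dist z x := by
      rw [ENNReal.inv_mul_cancel (by simp) (by simp), one_mul, hm]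

theorem IsRegTree.countable (hG : IsRegTree G d) (hd : d ≠ 0) : Countable V :=
  countable_of_connected_of_countable_neighborSet hG.1 fun v ↦
    (hG.2.2.finite_neighborSet hd v).countable

theorem IsRegTree.measure_exists_eq_le [MeasurableSpace V] (hG : IsRegTree G d) (hd : 2 ≤ d)
    {W : V → Measure (ℕ → V)} (hW : IsSRW G d W) (y z : V) :
    W y {ω | ∃ i, ω i = z} ≤ ((d : ℝ≥0∞) - 1)⁻¹ ^ G.dist y z := by
  have := hG.countable (by omega)
  rw [SimpleGraph.dist_comm]
  exact (hW.isChainLaw y).measure_exists_mem_le (A := {z})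
    (g := fun u ↦ ((d : ℝ≥0∞) - 1)⁻¹ ^ G.dist z u) (by simp)
    fun x hx ↦ (hG.tsum_srwStep_mul_inv_pow_dist hd hx).le

theorem ofReal_natCast_sub_one_inv_pow (hd : 2 ≤ d) (n : ℕ) :
    ENNReal.ofReal (((d : ℝ) - 1)⁻¹ ^ n) = ((d : ℝ≥0∞) - 1)⁻¹ ^ n := by
  have hpos : (0 : ℝ) < d - 1 := sub_pos.mpr (mod_cast hd)
  rw [ENNReal.ofReal_pow (inv_nonneg.mpr hpos.le), ENNReal.ofReal_inv_of_pos hpos,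
    ENNReal.ofReal_sub _ zero_le_one, ENNReal.ofReal_natCast, ENNReal.ofReal_one]

end RegularTree

end GFF

theorem tree_sphere_hitting_bound_general {d : ℕ} (hd : 2 ≤ d) {T : Type*} [MeasurableSpace T]
    {Gt : SimpleGraph T} (htree : GFF.IsRegTree Gt d) {W : T → Measure (ℕ → T)}
    (hW : GFF.IsSRW Gt d W) (A : Set T) (y z : T) :
    W y {ω | GFF.hitTime A ω ≠ ⊤ ∧ GFF.stopAt A ω = z} ≤
      ENNReal.ofReal (((d : ℝ) - 1)⁻¹ ^ Gt.dist y z) := by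
  rw [GFF.ofReal_natCast_sub_one_inv_pow hd]
  calc
    _ ≤ W y {ω | ∃ i, ω i = z} := measure_mono fun _ hω ↦ ⟨_, hω.2⟩
    _ ≤ _ := htree.measure_exists_eq_le hd hW y z

/-- hitting distribution of a sphere by SRW on the `d`-regular tree. -/
theorem tree_sphere_hitting_bound
    (d : ℕ) (hd : 3 ≤ d)
    (T : Type) [MeasurableSpace T]
    (Gt : SimpleGraph T) (o : T) (htree : GFF.IsRegTree Gt d)
    (W : T → Measure (ℕ → T)) (hW : GFF.IsSRW Gt d W)
    (R : ℕ) (y : T) (hy : y ∈ GFF.gball Gt o R) (z : T) (hz : Gt.dist o z = R) :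
    W y {ω | GFF.hitTime {u : T | Gt.dist o u = R} ω ≠ ⊤ ∧
        GFF.stopAt {u : T | Gt.dist o u = R} ω = z} ≤
      ENNReal.ofReal ((((d : ℝ) - 1)⁻¹) ^ ((R : ℤ) - (Gt.dist y o : ℤ))) := by
  have one_le : (1 : ℝ) ≤ d - 1 := by
    rify at hd
    linarith
  exact (tree_sphere_hitting_bound_general (by omega) htree hW _ y z).trans <|
    ENNReal.ofReal_le_ofReal <| hz ▸ GFF.pow_dist_le_zpow_dist_sub_dist htree.1
      (inv_pos.mpr (by linarith)) (inv_le_one_of_one_le₀ one_le) o y z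
end
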